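/- arXiv:1401.2940 — 3 statements merged into one kernel-verified Lean document; each statement's English description precedes it below -/
import Mathlib

section
/- Let Λ be a finite connected 4-valent G-arc-transitive graph. If G has an abelian normal subgroup that is not semiregular on the vertices of Λ, then Λ is isomorphic to the Praeger–Xu graph PX(2,r,s) for some integers r ≥ 3 and 1 ≤ s ≤ r−1. -/
/- STATEMENT 2:
Let Λ be a finite connected 4-valent G-arc-transitive graph. If G has an abelian normal
subgroup that is not semiregular on the vertices of Λ, then Λ ≅ PX(2,r,s) for some
r ≥ 3 and 1 ≤ s ≤ r−1. -/

namespace Stmt2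

/-- Vertex set of `PX(2,r,s)`: `ℤ₂ˢ × ℤᵣ`. -/
abbrev PXV (r s : ℕ) : Type := (Fin s → ZMod 2) × ZMod r

/-- The defining relation of `PX(2,r,s)`: `(n₀,…,n_{s−1},x)` is joined to
`(n₁,…,n_s,x+1)`. -/
def pxRel (r s : ℕ) (a b : PXV r s) : Prop :=
  b.2 = a.2 + 1 ∧ ∀ (i : ℕ) (h : i + 1 < s), b.1 ⟨i, by omega⟩ = a.1 ⟨i + 1, h⟩

/-- The Praeger–Xu graph `PX(2,r,s)`. -/
def PX (r s : ℕ) : SimpleGraph (PXV r s) := SimpleGraph.fromRel (pxRel r s)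

/-- A set of permutations is semiregular if only the identity fixes a point. -/
def Semiregular {V : Type} (N : Subgroup (Equiv.Perm V)) : Prop :=
  ∀ n ∈ N, ∀ v : V, n v = v → n = 1

section Core

variable {V A : Type} [CommGroup A] [MulAction A V] {r : ℕ} (π : V → ZMod r)

/-- Pointwise stabilizer of a fibre. -/
def St (A : Type) {V : Type} [CommGroup A] [MulAction A V] {r : ℕ} (π : V → ZMod r)
    (i : ZMod r) : Subgroup A where
  carrier := {n | ∀ v, π v = i → n • v = v}
  one_mem' := by intro v _; simp
  mul_mem' := by
    intro a b ha hb v hv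
    rw [mul_smul, hb v hv, ha v hv]
  inv_mem' := by
    intro a ha v hv
    rw [inv_smul_eq_iff, ha v hv]

/-- Group generated by consecutive stabilizers. -/
def TT (A : Type) {V : Type} [CommGroup A] [MulAction A V] {r : ℕ} (π : V → ZMod r)
    (i : ZMod r) : ℕ → Subgroup A
  | 0 => ⊥
  | m + 1 => TT A π i m ⊔ St A π (i + (m : ℕ))

theorem TT_succ' (i : ZMod r) (m : ℕ) :
    TT A π i (m + 1) = St A π i ⊔ TT A π (i + 1) m := by
  induction m with
  | zero => simp [TT]
  | succ m ih =>
    rw [TT, ih, TT, sup_assoc]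
    congr 3
    push_cast; ring

theorem TT_mono (i : ZMod r) {m k : ℕ} (h : m ≤ k) : TT A π i m ≤ TT A π i k := by
  induction h with
  | refl => exact le_rfl
  | step _ ih => exact ih.trans le_sup_left

theorem St_le_TT (i : ZMod r) {m a : ℕ} (h : a < m) : St A π (i + (a : ℕ)) ≤ TT A π i m :=
  le_trans (le_sup_right : _ ≤ TT A π i (a + 1)) (TT_mono π i h)

theorem core [NeZero r] (hr : 3 ≤ r) (Λ : SimpleGraph V)
    (hsurj : Function.Surjective π)
    (horb : ∀ v w, π v = π w → ∃ n : A, n • v = w)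
    (hpi : ∀ (n : A) v, π (n • v) = π v)
    (haut : ∀ (n : A) v w, Λ.Adj v w → Λ.Adj (n • v) (n • w))
    (hadj : ∀ v w, Λ.Adj v w → π w = π v + 1 ∨ π v = π w + 1)
    (hup : ∀ v, ∃ u₁ u₂, u₁ ≠ u₂ ∧ (∀ w, (Λ.Adj v w ∧ π w = π v + 1) ↔ w = u₁ ∨ w = u₂) ∧
      ∃ n : A, n • v = v ∧ n • u₁ = u₂)
    (hdown : ∀ v, ∃ w, Λ.Adj w v ∧ π v = π w + 1)
    (g : V ≃ V) (φ : A ≃* A) (hφ : ∀ a v, φ a • g v = g (a • v))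
    (hg : ∀ v, π (g v) = π v + 1)
    (hgen : Subgroup.closure {a : A | ∃ v : V, a • v = v} = ⊤) :
    ∃ s : ℕ, 1 ≤ s ∧ s ≤ r - 1 ∧ Nonempty (Λ ≃g PX r s) := by
  classical
  -- stabilizers
  have memSt : ∀ (n : A) v, n • v = v → n ∈ St A π (π v) := by
    intro n v h w hw
    obtain ⟨m, rfl⟩ := horb v w hw.symm
    rw [smul_smul, mul_comm, mul_smul, h]
  have memSt' : ∀ (n : A) v, n ∈ St A π (π v) → n • v = v := fun n v h => h v rfl
  have hbase : ∀ (v w : V) (n m : A), n • v = m • v → m⁻¹ * n ∈ St A π (π v) := by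
    intro v w n m h
    apply memSt
    rw [mul_smul, h, inv_smul_smul]
  -- index two
  have idx : ∀ (i : ZMod r) (x y : A), x ∈ St A π i → y ∈ St A π i → x ∉ St A π (i + 1) →
      y ∉ St A π (i + 1) → x⁻¹ * y ∈ St A π (i + 1) := by
    intro i x y hx hy hx' hy'
    obtain ⟨w, hw⟩ := hsurj (i + 1)
    obtain ⟨v, hvw, hv⟩ := hdown w
    have hvi : π v = i := by
      have := hv.symm.trans hw
      exact add_right_cancel this
    obtain ⟨u₁, u₂, hne, hu, -⟩ := hup v
    have key : ∀ z : A, z ∈ St A π i → z ∉ St A π (i + 1) →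
        (z • w = u₁ ∨ z • w = u₂) ∧ z • w ≠ w := by
      intro z hz hz'
      refine ⟨(hu _).1 ⟨?_, ?_⟩, ?_⟩
      · have := haut z v w hvw
        rwa [hz v hvi] at this
      · rw [hpi, hv]
      · intro h
        exact hz' (hw ▸ memSt z w h)
    have hw' := (hu w).1 ⟨hvw, hv⟩
    have h1 := key x hx hx'
    have h2 := key y hy hy'
    have : y • w = x • w := by
      rcases h1 with ⟨h1 | h1, h1'⟩ <;> rcases h2 with ⟨h2 | h2, h2'⟩ <;>
        rcases hw' with hw' | hw' <;> simp_all
    have := hbase w w _ _ this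
    rwa [hw] at this
  have nle : ∀ i : ZMod r, ∃ n ∈ St A π i, n ∉ St A π (i + 1) := by
    intro i
    obtain ⟨v, hv⟩ := hsurj i
    obtain ⟨u₁, u₂, hne, hu, n, hn, hn'⟩ := hup v
    have h1 := (hu u₁).2 (Or.inl rfl)
    refine ⟨n, hv ▸ memSt n v hn, fun h => hne ?_⟩
    rw [← hn', h u₁ (by rw [h1.2, hv])]
  -- rotation
  have gsurj : ∀ i : ZMod r, ∀ v, π v = i + 1 → ∃ u, π u = i ∧ ∃ n : A, n • g u = v := by
    intro i v hv
    obtain ⟨u, hu⟩ := hsurj i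
    exact ⟨u, hu, horb _ _ (by rw [hg, hu, hv])⟩
  have Strot : ∀ i : ZMod r, (St A π i).map φ.toMonoidHom = St A π (i + 1) := by
    intro i
    ext n
    constructor
    · rintro ⟨a, ha, rfl⟩
      obtain ⟨u, hu⟩ := hsurj i
      have h1 : (φ a) • g u = g u := by rw [hφ, ha u hu]
      have := memSt _ _ h1
      rw [hg, hu] at this
      exact this
    · intro hn
      refine ⟨φ.symm n, ?_, by simp⟩
      have hn' : φ (φ.symm n) = n := by simp
      intro v hv
      apply g.injective
      rw [← hφ, hn', hn (g v) (by rw [hg, hv])]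
  have Trot : ∀ (m : ℕ) (i : ZMod r), (TT A π i m).map φ.toMonoidHom = TT A π (i + 1) m := by
    intro m
    induction m with
    | zero => intro i; simp [TT]
    | succ m ih =>
      intro i
      rw [TT, Subgroup.map_sup, ih, Strot, TT]
      congr 2
      ring
  have Ttop1 : ∀ (m : ℕ) (i : ZMod r), TT A π i m = ⊤ → TT A π (i + 1) m = ⊤ := by
    intro m i h
    rw [← Trot, h]
    exact Subgroup.map_top_of_surjective _ φ.surjective
  have Ttop : ∀ (m : ℕ) (i j : ZMod r), TT A π i m = ⊤ → TT A π j m = ⊤ := by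
    intro m i j h
    have : ∀ k : ℕ, TT A π (i + (k : ℕ)) m = ⊤ := by
      intro k
      induction k with
      | zero => simpa using h
      | succ k ih =>
        have := Ttop1 _ _ ih
        rwa [add_assoc, ← Nat.cast_succ] at this
    have h2 := this (j - i).val
    rwa [ZMod.natCast_zmod_val, add_sub_cancel] at h2
  have Tr : TT A π 0 r = ⊤ := by
    rw [eq_top_iff, ← hgen, Subgroup.closure_le]
    rintro a ⟨v, hv⟩
    have h1 := memSt a v hv
    have h2 := St_le_TT (A := A) π 0 (ZMod.val_lt (π v))
    rw [ZMod.natCast_zmod_val, zero_add] at h2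
    exact h2 h1
  have hex : ∃ m, TT A π 0 m = ⊤ := ⟨r, Tr⟩
  obtain ⟨M, hM, hMle, hMmin⟩ : ∃ M, TT A π 0 M = ⊤ ∧ M ≤ r ∧ ∀ m < M, TT A π 0 m ≠ ⊤ :=
    ⟨Nat.find hex, Nat.find_spec hex, Nat.find_le Tr, fun m hm => Nat.find_min hex hm⟩
  have hM2 : 2 ≤ M := by
    by_contra hlt
    have h1 : TT A π 0 1 = ⊤ := by
      rw [eq_top_iff, ← hM]
      exact TT_mono π 0 (by omega)
    obtain ⟨n, -, hn⟩ := nle (-1)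
    apply hn
    have : n ∈ TT A π 0 1 := h1 ▸ Subgroup.mem_top n
    simpa [TT] using this
  obtain ⟨s, rfl⟩ : ∃ s, M = s + 1 := ⟨M - 1, by omega⟩
  have hs1 : 1 ≤ s := by omega
  have hsr : s < r := by omega
  have Hne : ∀ i, TT A π i s ≠ ⊤ := fun i h => hMmin s (by omega) (Ttop _ _ _ h)
  have Htop : ∀ i, St A π i ⊔ TT A π (i + 1) s = ⊤ := fun i => by
    rw [← TT_succ']; exact Ttop _ _ _ hM
  have St_le_H : ∀ i, St A π i ≤ TT A π i s := fun i => by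
    simpa using St_le_TT (A := A) π i (show 0 < s by omega)
  have hK : ∀ i x, x ∈ St A π i → x ∈ TT A π (i + 1) s → x ∈ St A π (i + 1) := by
    intro i x hx hx'
    by_contra hcon
    apply Hne (i + 1)
    rw [← Htop i, eq_comm, sup_eq_right]
    intro y hy
    by_cases hy' : y ∈ St A π (i + 1)
    · exact St_le_H _ hy'
    · have := St_le_H _ (idx i x y hx hy hcon hy')
      have := mul_mem hx' this
      simpa using this
  have hI : ∀ i x y, x ∉ TT A π i s → y ∉ TT A π i s → x * y ∈ TT A π i s := by
    intro i x y hx hy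
    obtain ⟨b, rfl⟩ : ∃ b, i = b + 1 := ⟨i - 1, by ring⟩
    obtain ⟨p, hp, q, hq, rfl⟩ := Subgroup.mem_sup.1 (show x ∈ St A π b ⊔ _ from
      (Htop b) ▸ Subgroup.mem_top x)
    obtain ⟨p', hp', q', hq', rfl⟩ := Subgroup.mem_sup.1 (show y ∈ St A π b ⊔ _ from
      (Htop b) ▸ Subgroup.mem_top y)
    have h1 : p⁻¹ ∉ St A π (b + 1) := fun h =>
      hx (mul_mem (St_le_H _ (by simpa using inv_mem h)) hq)
    have h2 : p' ∉ St A π (b + 1) := fun h => hy (mul_mem (St_le_H _ h) hq')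
    have h3 := St_le_H _ (idx b p⁻¹ p' (inv_mem hp) hp' h1 h2)
    have h4 := mul_mem h3 (mul_mem hq hq')
    convert h4 using 1
    rw [inv_inv]
    exact mul_mul_mul_comm _ _ _ _
  -- the up function
  choose up hup1 hup2 using fun v => (show ∃ u, Λ.Adj v u ∧ π u = π v + 1 by
    obtain ⟨u₁, u₂, -, hu, -⟩ := hup v
    exact ⟨u₁, (hu u₁).2 (Or.inl rfl)⟩)
  have uporb : ∀ v w w', Λ.Adj v w → π w = π v + 1 → Λ.Adj v w' → π w' = π v + 1 →
      ∃ n : A, n ∈ St A π (π v) ∧ n • w = w' := by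
    intro v w w' h1 h2 h3 h4
    obtain ⟨u₁, u₂, -, hu, n, hn, hn'⟩ := hup v
    have hnS := memSt n v hn
    rcases (hu w).1 ⟨h1, h2⟩ with rfl | rfl <;> rcases (hu w').1 ⟨h3, h4⟩ with rfl | rfl
    · exact ⟨1, one_mem _, one_smul _ _⟩
    · exact ⟨n, hnS, hn'⟩
    · exact ⟨n⁻¹, inv_mem hnS, by rw [← hn', inv_smul_smul]⟩
    · exact ⟨1, one_mem _, one_smul _ _⟩
  have hW : ∀ j : ZMod r, ∃ W : Set V,
      (∀ v (a : ℕ), a < s → π v = j + (a : ℕ) → ∀ n : A, n • v ∈ W ↔ (v ∈ W ↔ n ∈ TT A π j s)) ∧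
      (∀ v w (a : ℕ), a + 1 < s → π v = j + (a : ℕ) → π w = π v + 1 → Λ.Adj v w →
        (v ∈ W ↔ w ∈ W)) := by
    intro j
    obtain ⟨v₀, hv₀⟩ := hsurj j
    let b : ℕ → V := fun a => up^[a] v₀
    have hb1 : ∀ a, b (a + 1) = up (b a) := fun a => Function.iterate_succ_apply' up a v₀
    have hb2 : ∀ a, π (b a) = j + (a : ℕ) := by
      intro a
      induction a with
      | zero => simpa [b] using hv₀
      | succ a ih => rw [hb1, hup2, ih]; push_cast; ring
    have hW0 : ∀ (a : ℕ), a < s → ∀ m : A,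
        (∃ a' < s, ∃ n ∈ TT A π j s, m • b a = n • b a') ↔ m ∈ TT A π j s := by
      intro a ha m
      constructor
      · rintro ⟨a', ha', n, hn, h⟩
        have h1 : π (m • b a) = π (n • b a') := by rw [h]
        rw [hpi, hpi, hb2, hb2] at h1
        have h2 := add_left_cancel h1
        have h3 : a = a' := by
          have := congrArg ZMod.val h2
          rwa [ZMod.val_natCast_of_lt (by omega), ZMod.val_natCast_of_lt (by omega)] at this
        subst h3
        have h4 := hbase _ (b a) _ _ h
        rw [hb2] at h4
        have h5 := mul_mem hn (St_le_TT (A := A) π j ha h4)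
        simpa using h5
      · intro hm
        exact ⟨a, ha, m, hm, rfl⟩
    refine ⟨{u | ∃ a' < s, ∃ n ∈ TT A π j s, u = n • b a'}, ?_, ?_⟩
    · intro v a ha hv n
      obtain ⟨m, rfl⟩ := horb (b a) v (by rw [hb2, hv])
      simp only [Set.mem_ofPred_eq, smul_smul]
      rw [hW0 a ha, hW0 a ha]
      by_cases hm : m ∈ TT A π j s
      · simp only [hm, true_iff]
        exact Subgroup.mul_mem_cancel_right _ hm
      · simp only [hm, false_iff]
        by_cases hn : n ∈ TT A π j s
        · simp only [hn, not_true, iff_false]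
          rwa [Subgroup.mul_mem_cancel_left _ hn]
        · simp only [hn, not_false_iff, iff_true]
          exact hI _ _ _ hn hm
    · intro v w a ha hv hw hvw
      obtain ⟨m, rfl⟩ := horb (b a) v (by rw [hb2, hv])
      have h1 : Λ.Adj (m • b a) (m • b (a + 1)) := by
        apply haut; rw [hb1]; exact hup1 _
      obtain ⟨n, hn, rfl⟩ := uporb _ (m • b (a + 1)) w h1
        (by rw [hpi, hpi, hb1, hup2]) hvw hw
      simp only [Set.mem_ofPred_eq, smul_smul]
      rw [hW0 a (by omega), hW0 (a + 1) ha]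
      rw [hv] at hn
      rw [Subgroup.mul_mem_cancel_left _ (St_le_TT (A := A) π j (by omega) hn)]
  choose W hW1 hW2 using hW
  let bit : ℕ → V → ZMod 2 := fun a v => if v ∈ W (π v - (a : ℕ)) then 1 else 0
  have bit_iff : ∀ a v a' v', bit a v = bit a' v' ↔
      (v ∈ W (π v - (a : ℕ)) ↔ v' ∈ W (π v' - (a' : ℕ))) := by
    intro a v a' v'
    simp only [bit]
    split_ifs <;> simp_all
  have bit_up : ∀ v w (a : ℕ), a + 1 < s → Λ.Adj v w → π w = π v + 1 →
      bit (a + 1) w = bit a v := by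
    intro v w a ha hvw hw
    rw [bit_iff, hW2 (π v - (a : ℕ)) v w a ha (by ring) hw hvw]
    have : π w - ((a + 1 : ℕ) : ZMod r) = π v - (a : ℕ) := by rw [hw]; push_cast; ring
    rw [this]
  have bit_inj : ∀ v w, π v = π w → (∀ a < s, bit a v = bit a w) → v = w := by
    intro v w hvw hb
    obtain ⟨n, rfl⟩ := horb v w hvw
    have hn : ∀ a < s, n ∈ TT A π (π v - (a : ℕ)) s := by
      intro a ha
      have h1 := (bit_iff _ _ _ _).1 (hb a ha)
      rw [hpi, hW1 (π v - (a : ℕ)) v a ha (by ring)] at h1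
      tauto
    have hind : ∀ k a : ℕ, a + k + 1 = s → n ∈ TT A π (π v - (a : ℕ)) (a + 1) := by
      intro k
      induction k with
      | zero =>
        intro a ha
        have := hn a (by omega)
        rwa [← show a + 1 = s by omega] at this
      | succ k ih =>
        intro a ha
        have h1 := ih (a + 1) (by omega)
        rw [TT_succ'] at h1
        have e : π v - ((a + 1 : ℕ) : ZMod r) + 1 = π v - (a : ℕ) := by push_cast; ring
        obtain ⟨x, hx, y, hy, rfl⟩ := Subgroup.mem_sup.1 h1
        have h2 := hn a (by omega)
        have h3 := hK _ x hx
        rw [e] at hy h3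
        have h4 : x ∈ TT A π (π v - (a : ℕ)) s :=
          (Subgroup.mul_mem_cancel_right _ (TT_mono π _ (by omega) hy)).1 h2
        refine mul_mem ?_ hy
        have h5 := St_le_TT (A := A) π (π v - (a : ℕ)) (show 0 < a + 1 by omega)
        rw [Nat.cast_zero, add_zero] at h5
        exact h5 (h3 h4)
    have h0 := hind (s - 1) 0 (by omega)
    simp only [TT, Nat.cast_zero, sub_zero, add_zero, bot_sup_eq] at h0
    exact (memSt' n v h0).symm
  have bit0 : ∀ v u₁ u₂, Λ.Adj v u₁ → Λ.Adj v u₂ → π u₁ = π v + 1 → π u₂ = π v + 1 →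
      bit 0 u₁ = bit 0 u₂ → u₁ = u₂ := by
    intro v u₁ u₂ h1 h2 h3 h4 h
    apply bit_inj _ _ (h3.trans h4.symm)
    intro a ha
    rcases a with _ | a
    · exact h
    · rw [bit_up v u₁ a ha h1 h3, bit_up v u₂ a ha h2 h4]
  have z2 : ∀ x y z : ZMod 2, x ≠ y → z = x ∨ z = y := by decide
  have bsurj : ∀ m ≤ s, ∀ (c : ℕ → ZMod 2) (x : ZMod r), ∃ v, π v = x ∧ ∀ a < m, bit a v = c a := by
    intro m
    induction m with
    | zero =>
      intro _ c x
      obtain ⟨v, hv⟩ := hsurj x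
      exact ⟨v, hv, fun a ha => absurd ha (by omega)⟩
    | succ m ih =>
      intro hm c x
      obtain ⟨v, hv, hc⟩ := ih (by omega) (fun a => c (a + 1)) (x - 1)
      obtain ⟨u₁, u₂, hne, hu, -⟩ := hup v
      obtain ⟨h1, h1'⟩ := (hu u₁).2 (Or.inl rfl)
      obtain ⟨h2, h2'⟩ := (hu u₂).2 (Or.inr rfl)
      have key : ∀ u, Λ.Adj v u → π u = π v + 1 → c 0 = bit 0 u →
          ∃ v, π v = x ∧ ∀ a < m + 1, bit a v = c a := by
        intro u hu hu' h0
        refine ⟨u, by rw [hu', hv]; ring, ?_⟩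
        intro a ha
        rcases a with _ | a
        · exact h0.symm
        · rw [bit_up v u a (by omega) hu hu', hc a (by omega)]
      rcases z2 (bit 0 u₁) (bit 0 u₂) (c 0) (fun h => hne (bit0 v _ _ h1 h2 h1' h2' h)) with h | h
      · exact key _ h1 h1' h
      · exact key _ h2 h2' h
  let f : V → PXV r s := fun v => (fun k => bit (s - 1 - k) v, π v)
  have f_bit : ∀ v w, (f v).1 = (f w).1 → ∀ a < s, bit a v = bit a w := by
    intro v w h a ha
    have := congrFun h ⟨s - 1 - a, by omega⟩
    simp only [f] at this
    rwa [show s - 1 - (s - 1 - a) = a by omega] at this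
  have finj : Function.Injective f := by
    intro v w h
    have h2 : π v = π w := congrArg Prod.snd h
    exact bit_inj v w h2 (f_bit v w (congrArg Prod.fst h))
  have fsurj : Function.Surjective f := by
    rintro ⟨c, x⟩
    obtain ⟨v, hv, hc⟩ := bsurj s le_rfl
      (fun a => if h : s - 1 - a < s then c ⟨s - 1 - a, h⟩ else 0) x
    refine ⟨v, Prod.ext ?_ hv⟩
    funext k
    have hk := k.2
    change bit (s - 1 - k) v = c k
    rw [hc _ (by omega)]
    rw [dif_pos (by omega)]
    congr 1
    ext
    simp only
    omega
  have one_ne : ∀ x : ZMod r, x ≠ x + 1 := by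
    intro x h
    have h1 : (1 : ZMod r) = 0 := by
      have : x + 0 = x + 1 := by simpa using h
      exact (add_left_cancel this).symm
    have : Fact (1 < r) := ⟨by omega⟩
    exact one_ne_zero h1
  have rel_of_adj : ∀ v w, Λ.Adj v w → π w = π v + 1 → pxRel r s (f v) (f w) := by
    intro v w hvw hw
    refine ⟨hw, ?_⟩
    intro i hi
    change bit (s - 1 - i) w = bit (s - 1 - (i + 1)) v
    rw [show s - 1 - i = (s - 1 - (i + 1)) + 1 by omega]
    exact bit_up v w _ (by omega) hvw hw
  have adj_of_rel : ∀ v w, pxRel r s (f v) (f w) → Λ.Adj v w := by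
    intro v w ⟨hw, h⟩
    change π w = π v + 1 at hw
    obtain ⟨u₁, u₂, hne, hu, -⟩ := hup v
    obtain ⟨h1, h1'⟩ := (hu u₁).2 (Or.inl rfl)
    obtain ⟨h2, h2'⟩ := (hu u₂).2 (Or.inr rfl)
    have key : ∀ u, Λ.Adj v u → π u = π v + 1 → bit 0 w = bit 0 u → Λ.Adj v w := by
      intro u hu hu' h0
      have : w = u := by
        apply bit_inj _ _ (hw.trans hu'.symm)
        intro a ha
        rcases a with _ | a
        · exact h0
        · rw [bit_up v u a ha hu hu']
          have := h (s - 1 - (a + 1)) (by omega)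
          change bit (s - 1 - (s - 1 - (a + 1))) w = bit (s - 1 - (s - 1 - (a + 1) + 1)) v at this
          rwa [show s - 1 - (s - 1 - (a + 1)) = a + 1 by omega,
            show s - 1 - (s - 1 - (a + 1) + 1) = a by omega] at this
      rwa [this]
    rcases z2 (bit 0 u₁) (bit 0 u₂) (bit 0 w) (fun h => hne (bit0 v _ _ h1 h2 h1' h2' h)) with h | h
    · exact key _ h1 h1' h
    · exact key _ h2 h2' h
  refine ⟨s, hs1, by omega, ⟨⟨Equiv.ofBijective f ⟨finj, fsurj⟩, ?_⟩⟩⟩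
  intro v w
  change (SimpleGraph.fromRel (pxRel r s)).Adj (f v) (f w) ↔ Λ.Adj v w
  rw [SimpleGraph.fromRel_adj]
  constructor
  · rintro ⟨-, h | h⟩
    · exact adj_of_rel _ _ h
    · exact (adj_of_rel _ _ h).symm
  · intro h
    refine ⟨fun e => h.ne (finj e), ?_⟩
    rcases hadj v w h with h' | h'
    · exact Or.inl (rel_of_adj _ _ h h')
    · exact Or.inr (rel_of_adj _ _ h.symm h')

end Core

theorem conn_ind {V : Type} {Λ : SimpleGraph V} (hconn : Λ.Connected) (P : V → Prop) (v₀ : V)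
    (h0 : P v₀) (step : ∀ x y, Λ.Adj x y → P x → P y) : ∀ x, P x := by
  intro x
  obtain ⟨w⟩ := hconn.preconnected v₀ x
  induction w with
  | nil => exact h0
  | cons h _ ih => exact ih (step _ _ h h0)

/-- A complete bipartite graph with parts of size four is `PX(2,4,1)`. -/
theorem k44 {V : Type} [Fintype V] (Λ : SimpleGraph V) (S : Set V)
    (hS : S.ncard = 4) (hSc : Sᶜ.ncard = 4)
    (hadj : ∀ x y, Λ.Adj x y ↔ ¬ (x ∈ S ↔ y ∈ S)) : Nonempty (Λ ≃g PX 4 1) := by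
  classical
  let q : PXV 4 1 → Prop := fun a => a.2 = 1 ∨ a.2 = 3
  have hq : Fintype.card {a // q a} = 4 := by decide
  have hq' : Fintype.card {a // ¬ q a} = 4 := by decide
  have e1 : {x // x ∈ S} ≃ {a // q a} := by
    apply Fintype.equivOfCardEq
    rw [hq, ← hS, ← Nat.card_coe_set_eq, Nat.card_eq_fintype_card]
  have e2 : {x // ¬ x ∈ S} ≃ {a // ¬ q a} := by
    apply Fintype.equivOfCardEq
    rw [hq', ← hSc, ← Nat.card_coe_set_eq, Nat.card_eq_fintype_card]
    rfl
  let e : V ≃ PXV 4 1 :=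
    (Equiv.sumCompl (· ∈ S)).symm.trans ((Equiv.sumCongr e1 e2).trans (Equiv.sumCompl q))
  have he : ∀ x, q (e x) ↔ x ∈ S := by
    intro x
    by_cases hx : x ∈ S
    · have : e x = e1 ⟨x, hx⟩ := by simp [e, hx]
      rw [this]
      exact iff_of_true (e1 ⟨x, hx⟩).2 hx
    · have : e x = e2 ⟨x, hx⟩ := by simp [e, hx]
      rw [this]
      exact iff_of_false (e2 ⟨x, hx⟩).2 hx
  have hz : ∀ x y : ZMod 4, (y = x + 1 ∨ x = y + 1) ↔ ¬ ((x = 1 ∨ x = 3) ↔ (y = 1 ∨ y = 3)) := by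
    decide
  have hPX : ∀ a b, (PX 4 1).Adj a b ↔ ¬ (q a ↔ q b) := by
    intro a b
    rw [PX, SimpleGraph.fromRel_adj]
    have h1 : ∀ a b, pxRel 4 1 a b ↔ b.2 = a.2 + 1 := by
      intro a b
      refine ⟨fun h => h.1, fun h => ⟨h, fun i hi => absurd hi (by omega)⟩⟩
    rw [h1, h1, ← hz]
    constructor
    · exact fun h => h.2
    · intro h
      refine ⟨?_, h⟩
      rintro rfl
      rw [hz] at h
      exact h Iff.rfl
  refine ⟨⟨e, ?_⟩⟩
  intro x y
  rw [hPX, he, he, hadj]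

theorem level2 {V : Type} [Fintype V] (Λ : SimpleGraph V)
    (hconn : Λ.Connected)
    (hval : ∀ v : V, (Λ.neighborSet v).ncard = 4)
    (G : Subgroup (Equiv.Perm V))
    (hAut : ∀ g ∈ G, ∀ u v : V, Λ.Adj (g u) (g v) ↔ Λ.Adj u v)
    (hArcTrans : ∀ u v u' v' : V, Λ.Adj u v → Λ.Adj u' v' →
      ∃ g ∈ G, g u = u' ∧ g v = v')
    (N : Subgroup (Equiv.Perm V)) (hNG : N ≤ G)
    (hNnormal : ∀ g ∈ G, ∀ n ∈ N, g * n * g⁻¹ ∈ N)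
    (hNab : ∀ a ∈ N, ∀ b ∈ N, a * b = b * a)
    (hNnotsemi : ¬ Semiregular N)
    (hgen : Subgroup.closure {a : N | ∃ v : V, (a : Equiv.Perm V) v = v} = ⊤) :
    ∃ r s : ℕ, 3 ≤ r ∧ 1 ≤ s ∧ s ≤ r - 1 ∧ Nonempty (Λ ≃g PX r s) := by
  classical
  have hfix : ∀ n ∈ N, ∀ m ∈ N, ∀ v, n (m v) = m v ↔ n v = v := by
    intro n hn m hm v
    have : n (m v) = m (n v) := by
      rw [← Equiv.Perm.mul_apply, hNab n hn m hm, Equiv.Perm.mul_apply]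
    rw [this, m.apply_eq_iff_eq]
  have hNnormal' : ∀ g ∈ G, ∀ n ∈ N, g⁻¹ * n * g ∈ N := by
    intro g hg n hn
    simpa using hNnormal g⁻¹ (inv_mem hg) n hn
  -- `N_v` moves every neighbour of `v`
  have F3 : ∀ v w, Λ.Adj v w → ∃ n ∈ N, n v = v ∧ n w ≠ w := by
    by_contra hcon
    push Not at hcon
    obtain ⟨v, w, hvw, hn⟩ := hcon
    have hall : ∀ x y, Λ.Adj x y → ∀ n ∈ N, n x = x → n y = y := by
      intro x y hxy n hnN hnx
      obtain ⟨g, hg, rfl, rfl⟩ := hArcTrans v w x y hvw hxy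
      have h1 := hn _ (hNnormal' g hg n hnN) (by simp [hnx])
      simpa [Equiv.symm_apply_eq] using h1
    apply hNnotsemi
    intro n hnN u hu
    ext x
    exact conn_ind hconn (fun x => n x = x) u hu (fun x y h => hall x y h n hnN) x
  have noadj : ∀ v, ∀ n ∈ N, ¬ Λ.Adj v (n v) := by
    intro v n hn h
    obtain ⟨m, hm, h1, h2⟩ := F3 _ _ h
    exact h2 ((hfix m hm n hn v).2 h1)
  have hnb : ∀ v, ∃ a, Λ.Adj v a := by
    intro v
    have : (Λ.neighborSet v).Nonempty := by
      rw [← Set.ncard_pos (Set.toFinite _), hval]; norm_num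
    exact this
  by_cases hcase : ∃ v, ∀ w x, Λ.Adj v w → Λ.Adj v x → ∃ n ∈ N, n w = x
  · -- the graph is `K_{4,4}`
    obtain ⟨v, hv⟩ := hcase
    obtain ⟨a, hva⟩ := hnb v
    obtain ⟨t, ht, htv, hta⟩ := hArcTrans v a a v hva hva.symm
    have ha : ∀ w, Λ.Adj a w → ∃ n ∈ N, n v = w := by
      intro w hw
      have h1 : Λ.Adj v (t⁻¹ w) := by
        rw [← hAut t ht]; simpa [htv] using hw
      obtain ⟨n, hn, h⟩ := hv a _ hva h1
      refine ⟨t * n * t⁻¹, hNnormal t ht n hn, ?_⟩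
      have : t⁻¹ v = a := by rw [Equiv.Perm.inv_eq_iff_eq, hta]
      rw [Equiv.Perm.mul_apply, Equiv.Perm.mul_apply, this, h]
      simp
    have hcover : ∀ x, (∃ n ∈ N, n v = x) ∨ (∃ n ∈ N, n a = x) := by
      refine conn_ind hconn (fun x => (∃ n ∈ N, n v = x) ∨ (∃ n ∈ N, n a = x)) v (Or.inl ⟨1, one_mem _, rfl⟩) ?_
      rintro x y hxy (⟨n, hn, rfl⟩ | ⟨n, hn, rfl⟩)
      · right
        have h1 : Λ.Adj v (n⁻¹ y) := by
          rw [← hAut n (hNG hn)]; simpa using hxy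
        obtain ⟨m, hm, h⟩ := hv a _ hva h1
        exact ⟨n * m, mul_mem hn hm, by simp [h]⟩
      · left
        have h1 : Λ.Adj a (n⁻¹ y) := by
          rw [← hAut n (hNG hn)]; simpa using hxy
        obtain ⟨m, hm, h⟩ := ha _ h1
        exact ⟨n * m, mul_mem hn hm, by simp [h]⟩
    have hdec : ∀ n : N, ∃ x ∈ N, ∃ y ∈ N, x v = v ∧ y a = a ∧ (n : Equiv.Perm V) = x * y := by
      intro n
      have hn : n ∈ Subgroup.closure {a : N | ∃ v : V, (a : Equiv.Perm V) v = v} :=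
        hgen ▸ Subgroup.mem_top n
      induction hn using Subgroup.closure_induction with
      | mem n hn =>
        obtain ⟨u, hu⟩ := hn
        rcases hcover u with ⟨m, hm, rfl⟩ | ⟨m, hm, rfl⟩
        · exact ⟨n, n.2, 1, one_mem _, (hfix n n.2 m hm v).1 hu, rfl, by simp⟩
        · exact ⟨1, one_mem _, n, n.2, rfl, (hfix n n.2 m hm a).1 hu, by simp⟩
      | one => exact ⟨1, one_mem _, 1, one_mem _, rfl, rfl, by simp⟩
      | mul n m _ _ h1 h2 =>
        obtain ⟨x, hx, y, hy, hxv, hya, e⟩ := h1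
        obtain ⟨x', hx', y', hy', hxv', hya', e'⟩ := h2
        refine ⟨x * x', mul_mem hx hx', y * y', mul_mem hy hy', by simp [hxv, hxv'],
          by simp [hya, hya'], ?_⟩
        rw [Subgroup.coe_mul, e, e', mul_assoc, mul_assoc, ← mul_assoc y, ← mul_assoc x',
          hNab y hy x' hx']
      | inv n _ h1 =>
        obtain ⟨x, hx, y, hy, hxv, hya, e⟩ := h1
        refine ⟨x⁻¹, inv_mem hx, y⁻¹, inv_mem hy, ?_, ?_, ?_⟩
        · rw [Equiv.Perm.inv_eq_iff_eq, hxv]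
        · rw [Equiv.Perm.inv_eq_iff_eq, hya]
        · rw [Subgroup.coe_inv, e, hNab x hx y hy, mul_inv_rev]
    have hadj : ∀ m ∈ N, ∀ k ∈ N, Λ.Adj (m v) (k a) := by
      intro m hm k hk
      obtain ⟨x, hx, y, hy, hxv, hya, e⟩ := hdec ⟨m⁻¹ * k, mul_mem (inv_mem hm) hk⟩
      have e' : k = m * (x * y) := by rw [← e]; simp
      rw [e']
      simp only [Equiv.Perm.mul_apply, hya]
      rw [hAut m (hNG hm)]
      have := (hAut x (hNG hx) v a).2 hva
      rwa [hxv] at this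
    have hSa : ∀ x, x ∈ Λ.neighborSet v ↔ ∃ n ∈ N, n a = x := by
      intro x
      constructor
      · intro hx
        exact hv a x hva hx
      · rintro ⟨n, hn, rfl⟩
        exact hadj 1 (one_mem _) n hn
    have hSc : ∀ x, x ∉ Λ.neighborSet v ↔ ∃ n ∈ N, n v = x := by
      intro x
      constructor
      · intro hx
        rw [hSa] at hx
        exact (hcover x).resolve_right hx
      · rintro ⟨n, hn, rfl⟩
        exact noadj v n hn
    refine ⟨4, 1, by norm_num, le_rfl, by norm_num, k44 Λ (Λ.neighborSet v) (hval v) ?_ ?_⟩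
    · have : (Λ.neighborSet v)ᶜ = Λ.neighborSet a := by
        ext x
        rw [Set.mem_compl_iff, hSc]
        constructor
        · rintro ⟨n, hn, rfl⟩
          exact (hadj n hn 1 (one_mem _)).symm
        · exact ha x
      rw [this, hval]
    · have hsame : ∀ u, ∀ m ∈ N, ∀ k ∈ N, ¬ Λ.Adj (m u) (k u) := by
        intro u m hm k hk h
        apply noadj (m u) (k * m⁻¹) (mul_mem hk (inv_mem hm))
        simpa using h
      intro x y
      by_cases hx : x ∈ Λ.neighborSet v <;> by_cases hy : y ∈ Λ.neighborSet v
      · simp only [hx, hy, not_true, iff_false]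
        obtain ⟨m, hm, rfl⟩ := (hSa x).1 hx
        obtain ⟨k, hk, rfl⟩ := (hSa y).1 hy
        exact hsame a m hm k hk
      · simp only [hx, hy, iff_false, not_true, not_false_iff, iff_true]
        obtain ⟨m, hm, rfl⟩ := (hSa x).1 hx
        obtain ⟨k, hk, rfl⟩ := (hSc y).1 hy
        exact (hadj k hk m hm).symm
      · simp only [hx, hy, iff_true, not_false_iff]
        obtain ⟨m, hm, rfl⟩ := (hSc x).1 hx
        obtain ⟨k, hk, rfl⟩ := (hSa y).1 hy
        exact hadj m hm k hk
      · simp only [hx, hy, not_true, iff_false]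
        obtain ⟨m, hm, rfl⟩ := (hSc x).1 hx
        obtain ⟨k, hk, rfl⟩ := (hSc y).1 hy
        exact hsame v m hm k hk
  · -- the cyclic case
    push Not at hcase
    obtain ⟨v₁⟩ := hconn.nonempty
    obtain ⟨v₀, v₂, h10, h12, hno⟩ := hcase v₁
    obtain ⟨g, hg, hg0, hg1⟩ := hArcTrans v₀ v₁ v₁ v₂ h10.symm h12
    have hgk : ∀ k : ℤ, g ^ k ∈ G := fun k => zpow_mem hg k
    -- membership of a vertex in the k-th orbit
    let E : ℤ → V → Prop := fun k v => ∃ n ∈ N, n ((g ^ k) v₀) = v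
    have hEself : ∀ k, E k ((g ^ k) v₀) := fun k => ⟨1, one_mem _, rfl⟩
    have hEN : ∀ k v, ∀ n ∈ N, E k v → E k (n v) := by
      rintro k v n hn ⟨m, hm, rfl⟩
      exact ⟨n * m, mul_mem hn hm, rfl⟩
    have hEg : ∀ l k v, E k v → E (l + k) ((g ^ l) v) := by
      rintro l k v ⟨m, hm, rfl⟩
      refine ⟨g ^ l * m * (g ^ l)⁻¹, hNnormal _ (hgk l) m hm, ?_⟩
      rw [zpow_add]
      simp
    have hEorb : ∀ k v w, E k v → E k w → ∃ n ∈ N, n v = w := by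
      rintro k v w ⟨m, hm, rfl⟩ ⟨m', hm', rfl⟩
      exact ⟨m' * m⁻¹, mul_mem hm' (inv_mem hm), by simp⟩
    have hEtr : ∀ k l v, E k v → E l v → ∀ w, E k w → E l w := by
      intro k l v h1 h2 w h3
      obtain ⟨n, hn, rfl⟩ := hEorb k v w h1 h3
      exact hEN _ _ n hn h2
    let S : AddSubgroup ℤ :=
      { carrier := {k | E k v₀}
        zero_mem' := by simpa using hEself 0
        add_mem' := by
          intro a b ha hb
          have h1 : E (a + b) ((g ^ a) v₀) := hEg a b v₀ hb
          exact hEtr a (a + b) _ (hEself a) h1 _ ha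
        neg_mem' := by
          intro a ha
          have h1 : E (-a + a) ((g ^ (-a)) v₀) := hEg (-a) a v₀ ha
          rw [neg_add_cancel] at h1
          have h0 : E 0 v₀ := by simpa using hEself 0
          exact hEtr 0 (-a) _ h1 (hEself (-a)) _ h0 }
    have hS : ∀ k, k ∈ S ↔ E k v₀ := fun k => Iff.rfl
    obtain ⟨r, hr⟩ : ∃ r : ℕ, ∀ k, E k v₀ ↔ (r : ℤ) ∣ k := by
      obtain ⟨a, ha⟩ := Int.subgroup_cyclic S
      refine ⟨a.natAbs, fun k => ?_⟩
      rw [← hS, ha, Int.natAbs_dvd, ← AddSubgroup.zmultiples_eq_closure, Int.mem_zmultiples_iff]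
    have hr0 : r ≠ 0 := by
      rintro rfl
      have h1 := (hr (orderOf g)).1 (by
        refine ⟨1, one_mem _, ?_⟩
        simp [pow_orderOf_eq_one])
      have : (orderOf g : ℤ) = 0 := by simpa using h1
      have h2 := orderOf_pos g
      omega
    have hr1 : r ≠ 1 := by
      rintro rfl
      obtain ⟨n, hn, h⟩ := (hr 1).2 (by simp)
      simp only [zpow_one, hg0] at h
      apply noadj v₁ n hn
      rw [h]; exact h10
    have hgg : (g ^ (2 : ℤ)) v₀ = v₂ := by
      rw [zpow_ofNat, pow_two, Equiv.Perm.mul_apply, hg0, hg1]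
    have hr2 : r ≠ 2 := by
      rintro rfl
      obtain ⟨n, hn, h⟩ := (hr 2).2 (by simp)
      rw [hgg] at h
      apply hno n⁻¹ (inv_mem hn)
      rw [Equiv.Perm.inv_eq_iff_eq, h]
    have hr3 : 3 ≤ r := by omega
    have : NeZero r := ⟨hr0⟩
    have hEmod : ∀ k l v, E k v → E l v → (k : ZMod r) = l := by
      intro k l v h1 h2
      rw [ZMod.intCast_eq_intCast_iff_dvd_sub, ← hr]
      have h3 : E (-k + k) ((g ^ (-k)) v) := hEg (-k) k v h1
      have h4 : E (-k + l) ((g ^ (-k)) v) := hEg (-k) l v h2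
      rw [neg_add_cancel] at h3
      have := hEtr _ _ _ h3 h4 v₀ (by simpa using hEself 0)
      rwa [show l - k = -k + l by ring]
    have hEmod' : ∀ (k l : ℤ) v, E k v → (k : ZMod r) = (l : ZMod r) → E l v := by
      intro k l v h1 h2
      rw [ZMod.intCast_eq_intCast_iff_dvd_sub, ← hr] at h2
      have h3 : E (k + (l - k)) ((g ^ k) v₀) := hEg k (l - k) v₀ h2
      rw [add_sub_cancel] at h3
      exact hEtr _ _ _ (hEself k) h3 v h1
    -- neighbours of `v₀`
    set m₁ := g⁻¹ v₀ with hm₁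
    have hm1 : g m₁ = v₀ := by simp [hm₁]
    have h01 : Λ.Adj v₀ v₁ := h10.symm
    have h0m : Λ.Adj v₀ m₁ := by
      rw [← hAut g hg, hm1, hg0]; exact h10
    have E1 : E 1 v₁ := by have := hEself 1; rwa [zpow_one, hg0] at this
    have Em1 : E (-1) m₁ := by have := hEself (-1); rwa [zpow_neg_one] at this
    obtain ⟨n, hn, hn0, hn1⟩ := F3 _ _ h01
    obtain ⟨m, hm, hm0, hmm⟩ := F3 _ _ h0m
    have hdis : ∀ x, E 1 x → ¬ E (-1) x := by
      intro x h1 h2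
      have := hEmod _ _ _ h1 h2
      rw [ZMod.intCast_eq_intCast_iff_dvd_sub] at this
      have h3 : (r : ℤ) ∣ 2 := by
        have := (dvd_neg).2 this
        simpa using this
      have := Int.le_of_dvd (by norm_num) h3
      omega
    have E1' := hEN _ _ n hn E1
    have Em1' := hEN _ _ m hm Em1
    have hnbr : ∀ x, Λ.Adj v₀ x → x = v₁ ∨ x = n v₁ ∨ x = m₁ ∨ x = m m₁ := by
      have hn' : Λ.Adj v₀ (n v₁) := by
        have := (hAut n (hNG hn) v₀ v₁).2 h01; rwa [hn0] at this
      have hm' : Λ.Adj v₀ (m m₁) := by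
        have := (hAut m (hNG hm) v₀ m₁).2 h0m; rwa [hm0] at this
      have d1 : v₁ ≠ n v₁ := hn1.symm
      have d2 : m₁ ≠ m m₁ := hmm.symm
      have dd : ∀ x y, E 1 x → E (-1) y → x ≠ y := by
        rintro x _ h1 h2 rfl
        exact hdis _ h1 h2
      have hsub : ({v₁, n v₁, m₁, m m₁} : Set V) ⊆ Λ.neighborSet v₀ := by
        intro x hx
        simp only [Set.mem_insert_iff, Set.mem_singleton_iff] at hx
        rcases hx with rfl | rfl | rfl | rfl <;> assumption
      have hcard : ({v₁, n v₁, m₁, m m₁} : Set V).ncard = 4 := by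
        rw [Set.ncard_insert_of_notMem, Set.ncard_insert_of_notMem, Set.ncard_pair d2]
        · simp [dd _ _ E1' Em1, dd _ _ E1' Em1']
        · simp [dd _ _ E1 Em1, dd _ _ E1 Em1', d1]
      have heq := Set.eq_of_subset_of_ncard_le hsub (by rw [hval, hcard])
      intro x hx
      have : x ∈ ({v₁, n v₁, m₁, m m₁} : Set V) := heq ▸ hx
      simpa using this
    have hnbr1 : ∀ x, Λ.Adj v₀ x → E 1 x ∨ E (-1) x := by
      intro x hx
      rcases hnbr x hx with rfl | rfl | rfl | rfl
      · exact Or.inl E1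
      · exact Or.inl E1'
      · exact Or.inr Em1
      · exact Or.inr Em1'
    have hEadj : ∀ k v w, E k v → Λ.Adj v w → E (k + 1) w ∨ E (k + -1) w := by
      rintro k v w ⟨p, hp, rfl⟩ hvw
      have h1 : Λ.Adj v₀ ((g ^ k)⁻¹ (p⁻¹ w)) := by
        rw [← hAut _ (hgk k), ← hAut p (hNG hp)]; simpa using hvw
      rcases hnbr1 _ h1 with h | h
      · left
        have := hEN _ _ p hp (hEg k _ _ h)
        simpa using this
      · right
        have := hEN _ _ p hp (hEg k _ _ h)
        simpa using this
    have hEall : ∀ v, ∃ k, E k v := by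
      refine conn_ind hconn (fun v => ∃ k, E k v) v₀ ⟨0, by simpa using hEself 0⟩ ?_
      rintro x y hxy ⟨k, hk⟩
      rcases hEadj k x y hk hxy with h | h
      · exact ⟨_, h⟩
      · exact ⟨_, h⟩
    choose κ hκ using hEall
    let π : V → ZMod r := fun v => (κ v : ZMod r)
    have hπ : ∀ k v, E k v ↔ π v = k := fun k v =>
      ⟨fun h => hEmod _ _ v (hκ v) h, fun h => hEmod' _ _ v (hκ v) h⟩
    have hπN : ∀ p ∈ N, ∀ v, π (p v) = π v := fun p hp v =>
      (hπ (κ v) _).1 (hEN _ _ p hp (hκ v))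
    have hπg : ∀ (k : ℤ) v, π ((g ^ k) v) = π v + k := by
      intro k v
      rw [(hπ _ _).1 (hEg k _ _ (hκ v))]
      push_cast
      exact add_comm _ _
    letI : CommGroup N := { (inferInstance : Group N) with
      mul_comm := fun a b => Subtype.ext (hNab a a.2 b b.2) }
    have hπ0 : π v₀ = 0 := by simpa using (hπ 0 v₀).1 (by simpa using hEself 0)
    have hπ1 : π v₁ = 1 := by simpa using (hπ 1 v₁).1 E1
    have hπm : π m₁ = -1 := by simpa using (hπ (-1) m₁).1 Em1
    have hgG' : ∀ a : N, g * a * g⁻¹ ∈ N := fun a => hNnormal g hg a a.2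
    let φ : N ≃* N :=
      { toFun := fun a => ⟨g * a * g⁻¹, hNnormal g hg a a.2⟩
        invFun := fun a => ⟨g⁻¹ * a * g, hNnormal' g hg a a.2⟩
        left_inv := by intro a; ext1; simp [mul_assoc]
        right_inv := by intro a; ext1; simp [mul_assoc]
        map_mul' := by intro a b; ext1; simp [mul_assoc] }
    obtain ⟨s, h1, h2, h3⟩ := core (A := N) π hr3 Λ
      (by
        intro i
        refine ⟨(g ^ (i.val : ℤ)) v₀, ?_⟩
        rw [hπg, hπ0, Int.cast_natCast, ZMod.natCast_zmod_val, zero_add])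
      (by
        intro v w h
        obtain ⟨p, hp, h'⟩ := hEorb (κ v) v w (hκ v) ((hπ _ _).2 h.symm)
        exact ⟨⟨p, hp⟩, h'⟩)
      (fun p v => hπN p p.2 v)
      (fun p v w h => (hAut p (hNG p.2) v w).2 h)
      (by
        intro v w h
        rcases hEadj _ v w (hκ v) h with h | h
        · left
          rw [(hπ _ _).1 h]; push_cast; rfl
        · right
          rw [(hπ _ _).1 h]; push_cast
          change π v = π v + -1 + 1
          ring)
      (by
        intro v
        obtain ⟨p, hp, hpv⟩ := hκ v
        set k := κ v with hk
        have hb : p * g ^ k ∈ G := mul_mem (hNG hp) (hgk k)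
        set b := p * g ^ k with hbdef
        have hb0 : b v₀ = v := hpv
        have hbπ : ∀ x, π (b x) = π x + k := by
          intro x
          rw [hbdef, Equiv.Perm.mul_apply, hπN p hp, hπg]
        refine ⟨b v₁, b (n v₁), ?_, ?_, ⟨b * n * b⁻¹, hNnormal b hb n hn⟩, ?_, ?_⟩
        · intro h; exact hn1 (b.injective h).symm
        · intro w
          rw [← hb0, hbπ, hπ0]
          constructor
          · rintro ⟨h1, h2⟩
            have h1' : Λ.Adj v₀ (b⁻¹ w) := by
              rw [← hAut b hb]; simpa using h1
            have h2' : π (b⁻¹ w) = (1 : ℤ) := by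
              have := hbπ (b⁻¹ w)
              rw [show b (b⁻¹ w) = w by simp, h2] at this
              have : 1 + (k : ZMod r) = π (b⁻¹ w) + k := by rw [← this]; ring
              rw [← add_right_cancel this]; simp
            have h3 := hdis _ ((hπ _ _).2 h2')
            rcases hnbr _ h1' with h | h | h | h
            · left; rw [← h]; simp
            · right; rw [← h]; simp
            · exact absurd (h ▸ Em1) h3
            · exact absurd (h ▸ Em1') h3
          · rintro (rfl | rfl)
            · refine ⟨(hAut b hb _ _).2 h01, ?_⟩
              rw [hbπ, hπ1]; ring
            · refine ⟨(hAut b hb _ _).2 ?_, ?_⟩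
              · have := (hAut n (hNG hn) v₀ v₁).2 h01; rwa [hn0] at this
              · rw [hbπ, hπN n hn, hπ1]; ring
        · change (b * n * b⁻¹) v = v
          rw [← hb0]; simp [hn0]
        · change (b * n * b⁻¹) (b v₁) = b (n v₁)
          simp)
      (by
        intro v
        obtain ⟨p, hp, hpv⟩ := hκ v
        have hb : p * g ^ (κ v) ∈ G := mul_mem (hNG hp) (hgk _)
        refine ⟨(p * g ^ (κ v)) m₁, ?_, ?_⟩
        · have := (hAut _ hb _ _).2 h0m.symm
          rwa [Equiv.Perm.mul_apply _ _ v₀, hpv] at this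
        · rw [Equiv.Perm.mul_apply, hπN p hp, hπg, hπm]
          change π v = -1 + π v + 1
          ring)
      g φ
      (by
        intro a v
        change (g * a * g⁻¹) (g v) = g ((a : Equiv.Perm V) v)
        simp)
      (by
        intro v
        have := hπg 1 v
        simpa using this)
      hgen
    exact ⟨r, s, hr3, h1, h2, h3⟩

theorem stmt2 {V : Type} [Fintype V] (Λ : SimpleGraph V)
    (hconn : Λ.Connected)
    (hval : ∀ v : V, (Λ.neighborSet v).ncard = 4)
    (G : Subgroup (Equiv.Perm V))
    (hAut : ∀ g ∈ G, ∀ u v : V, Λ.Adj (g u) (g v) ↔ Λ.Adj u v)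
    (hArcTrans : ∀ u v u' v' : V, Λ.Adj u v → Λ.Adj u' v' →
      ∃ g ∈ G, g u = u' ∧ g v = v')
    (N : Subgroup (Equiv.Perm V)) (hNG : N ≤ G)
    (hNnormal : ∀ g ∈ G, ∀ n ∈ N, g * n * g⁻¹ ∈ N)
    (hNab : ∀ a ∈ N, ∀ b ∈ N, a * b = b * a)
    (hNnotsemi : ¬ Semiregular N) :
    ∃ r s : ℕ, 3 ≤ r ∧ 1 ≤ s ∧ s ≤ r - 1 ∧ Nonempty (Λ ≃g PX r s) := by
  classical
  let k : Set (Equiv.Perm V) := {n | n ∈ N ∧ ∃ v, n v = v}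
  have hle : Subgroup.closure k ≤ N := by
    rw [Subgroup.closure_le]
    exact fun n hn => hn.1
  refine level2 Λ hconn hval G hAut hArcTrans (Subgroup.closure k) (hle.trans hNG) ?_
    (fun a ha b hb => hNab a (hle ha) b (hle hb)) ?_ ?_
  · intro g hg n hn
    have h1 : (Subgroup.closure k).map (MulAut.conj g).toMonoidHom ≤ Subgroup.closure k := by
      rw [MonoidHom.map_closure, Subgroup.closure_le]
      rintro _ ⟨a, ⟨ha, v, hv⟩, rfl⟩
      apply Subgroup.subset_closure
      refine ⟨hNnormal g hg a ha, g v, ?_⟩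
      simp [hv]
    exact h1 ⟨n, hn, rfl⟩
  · intro h
    apply hNnotsemi
    intro n hn v hv
    exact h n (Subgroup.subset_closure ⟨hn, v, hv⟩) v hv
  · rw [eq_top_iff, ← Subgroup.closure_closure_coe_preimage (k := k)]
    apply Subgroup.closure_mono
    rintro a ⟨-, v, hv⟩
    exact ⟨v, hv⟩

end Stmt2
end

section
/- Let r ≥ 3 and 1 ≤ s ≤ r−1 be integers, and let C be an arc-transitive cycle decomposition of PX(2,r,s) all of whose cycles have length 4. Then there is an automorphism of PX(2,r,s) mapping C to the natural cycle decomposition of PX(2,r,s); that is, up to conjugacy in Aut(PX(2,r,s)), the natural cycle decomposition is the unique arc-transitive cycle decomposition of PX(2,r,s) into 4-cycles. -/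
/- STATEMENT 3:
Let r ≥ 3 and 1 ≤ s ≤ r−1, and let C be an arc-transitive cycle decomposition of
PX(2,r,s) all of whose cycles have length 4. Then some automorphism of PX(2,r,s) maps C
to the natural cycle decomposition of PX(2,r,s). -/

namespace Stmt3

/-- Vertex set of `PX(2,r,s)`: `ℤ₂ˢ × ℤᵣ`. -/
abbrev PXV (r s : ℕ) : Type := (Fin s → ZMod 2) × ZMod r

/-- The defining relation of `PX(2,r,s)`: `(n₀,…,n_{s−1},x)` is joined to
`(n₁,…,n_s,x+1)`. -/
def pxRel (r s : ℕ) (a b : PXV r s) : Prop :=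
  b.2 = a.2 + 1 ∧ ∀ (i : ℕ) (h : i + 1 < s), b.1 ⟨i, by omega⟩ = a.1 ⟨i + 1, h⟩

/-- The Praeger–Xu graph `PX(2,r,s)`. -/
def PX (r s : ℕ) : SimpleGraph (PXV r s) := SimpleGraph.fromRel (pxRel r s)

/-- A cycle in a graph: a connected subgraph that is regular of valency 2. -/
def IsCycleSubgraph {V : Type} {Λ : SimpleGraph V} (C : Λ.Subgraph) : Prop :=
  C.Connected ∧ ∀ v ∈ C.verts, (C.neighborSet v).ncard = 2

/-- `D` is the image of the subgraph `C` under the permutation `π`. -/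
def IsMapOf {V : Type} {Λ : SimpleGraph V} (π : Equiv.Perm V) (C D : Λ.Subgraph) : Prop :=
  D.verts = π '' C.verts ∧ ∀ u v, D.Adj u v ↔ C.Adj (π⁻¹ u) (π⁻¹ v)

/-- The word `(n₁,…,n_{s−1},b)` obtained from `n = (n₀,…,n_{s−1})` by shifting and
appending `b`. -/
def shiftTo {s : ℕ} (n : Fin s → ZMod 2) (b : ZMod 2) : Fin s → ZMod 2 :=
  fun i => if h : (i : ℕ) + 1 < s then n ⟨(i : ℕ) + 1, h⟩ else b

/-- The pair of vertices `{(0,n',x),(1,n',x)}` of the natural 4-cycle through `(n,x)`. -/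
def natLeft {r s : ℕ} (hs : 0 < s) (n : Fin s → ZMod 2) (x : ZMod r) : Set (PXV r s) :=
  {(n, x), (Function.update n ⟨0, hs⟩ (n ⟨0, hs⟩ + 1), x)}

/-- The pair of vertices `{(n',0,x+1),(n',1,x+1)}` of the natural 4-cycle through `(n,x)`. -/
def natRight {r s : ℕ} (n : Fin s → ZMod 2) (x : ZMod r) : Set (PXV r s) :=
  {(shiftTo n 0, x + 1), (shiftTo n 1, x + 1)}

/-- The natural cycle decomposition of `PX(2,r,s)`, consisting of the 4-cycles
`C_{n,x} = ((0,n,x),(n,0,x+1),(1,n,x),(n,1,x+1))` for `n ∈ ℤ₂^{s-1}` and `x ∈ ℤᵣ`. -/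
def NaturalDecomp (r s : ℕ) (hs : 0 < s) : Set ((PX r s).Subgraph) :=
  {D | ∃ (n : Fin s → ZMod 2) (x : ZMod r),
    D.verts = natLeft hs n x ∪ natRight n x ∧
    ∀ u v, D.Adj u v ↔
      ((u ∈ natLeft hs n x ∧ v ∈ natRight n x) ∨
       (v ∈ natLeft hs n x ∧ u ∈ natRight n x))}

/-- The subgraph `C` is the 4-cycle `u v w t` (so `u, w` and `v, t` are the antipodal pairs). -/
def Quad {V : Type} {Λ : SimpleGraph V} (C : Λ.Subgraph) (u w v t : V) : Prop :=
  u ≠ w ∧ v ≠ t ∧ C.verts = {u, w} ∪ {v, t} ∧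
  ∀ a b, C.Adj a b ↔ ((a ∈ ({u, w} : Set V) ∧ b ∈ ({v, t} : Set V)) ∨
    (b ∈ ({u, w} : Set V) ∧ a ∈ ({v, t} : Set V)))

lemma Quad.swap {V : Type} {Λ : SimpleGraph V} {C : Λ.Subgraph} {u w v t : V}
    (h : Quad C u w v t) : Quad C v t u w := by
  obtain ⟨h1, h2, h3, h4⟩ := h
  refine ⟨h2, h1, by rw [h3, Set.union_comm], fun a b => ?_⟩
  rw [h4]; tauto

lemma Quad.left {V : Type} {Λ : SimpleGraph V} {C : Λ.Subgraph} {u w v t : V}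
    (h : Quad C u w v t) : Quad C w u v t := by
  unfold Quad at *
  rw [Set.pair_comm w u]
  exact ⟨h.1.symm, h.2⟩

lemma Quad.right {V : Type} {Λ : SimpleGraph V} {C : Λ.Subgraph} {u w v t : V}
    (h : Quad C u w v t) : Quad C u w t v := h.swap.left.swap

lemma Quad.adj {V : Type} {Λ : SimpleGraph V} {C : Λ.Subgraph} {u w v t : V}
    (h : Quad C u w v t) : C.Adj u v := by
  rw [h.2.2.2]; simp

lemma exists_quad {V : Type} {Λ : SimpleGraph V} (C : Λ.Subgraph)
    (hC : IsCycleSubgraph C) (h4 : C.verts.ncard = 4) (u v : V) (huv : C.Adj u v) :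
    ∃ w t, Quad C u w v t := by
  obtain ⟨-, hreg⟩ := hC
  have hu := C.edge_vert huv
  have hv := C.edge_vert huv.symm
  have two : ∀ a b, C.Adj a b → ∃ c, c ≠ b ∧ C.neighborSet a = {b, c} := by
    intro a b hab
    obtain ⟨x, y, hxy, he⟩ := Set.ncard_eq_two.1 (hreg a (C.edge_vert hab))
    have hb : b ∈ C.neighborSet a := hab
    rw [he] at hb
    rcases hb with rfl | hb
    · exact ⟨y, hxy.symm, he⟩
    · rw [Set.mem_singleton_iff] at hb
      subst hb
      exact ⟨x, hxy, by rw [he, Set.pair_comm]⟩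
  obtain ⟨t, htv, hNu⟩ := two u v huv
  have hut : C.Adj u t := by
    have : t ∈ C.neighborSet u := by rw [hNu]; simp
    exact this
  have ht := C.edge_vert hut.symm
  have hsub : ({u, v, t} : Set V) ⊆ C.verts := by
    rintro x (rfl | rfl | rfl) <;> assumption
  have h3 : ({u, v, t} : Set V).ncard = 3 :=
    Set.ncard_eq_three.2 ⟨u, v, t, huv.ne, hut.ne, htv.symm, rfl⟩
  have hfin : C.verts.Finite := Set.finite_of_ncard_ne_zero (by omega)
  have hd : (C.verts \ {u, v, t}).ncard = 1 := by
    rw [Set.ncard_sdiff hsub (hfin.subset hsub)]; omega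
  obtain ⟨w, hw⟩ := Set.ncard_eq_one.1 hd
  have hwm : w ∈ C.verts \ {u, v, t} := by rw [hw]; simp
  have hverts : ∀ x, x ∈ C.verts ↔ x = u ∨ x = w ∨ x = v ∨ x = t := by
    intro x
    constructor
    · intro hx
      by_cases hx' : x ∈ ({u, v, t} : Set V)
      · simp at hx'; tauto
      · have : x ∈ C.verts \ {u, v, t} := ⟨hx, hx'⟩
        rw [hw] at this
        simp at this; tauto
    · rintro (rfl | rfl | rfl | rfl)
      · assumption
      · exact hwm.1
      · assumption
      · assumption
  have hwn : w ≠ u ∧ w ≠ v ∧ w ≠ t := by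
    have := hwm.2; simp at this; tauto
  have mem : ∀ a b, C.Adj a b → b = u ∨ b = w ∨ b = v ∨ b = t :=
    fun a b h => (hverts b).1 (C.edge_vert h.symm)
  have huN : ∀ b, C.Adj u b ↔ b = v ∨ b = t := by
    intro b
    have : b ∈ C.neighborSet u ↔ b ∈ ({v, t} : Set V) := by rw [hNu]
    simpa using this
  have huw : ¬ C.Adj u w := by rw [huN]; tauto
  -- neighbours of `w`
  obtain ⟨x, y, hxy, hNw⟩ := Set.ncard_eq_two.1 (hreg w hwm.1)
  have hwN : ∀ b, C.Adj w b ↔ b = x ∨ b = y := by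
    intro b
    have : b ∈ C.neighborSet w ↔ b ∈ ({x, y} : Set V) := by rw [hNw]
    simpa using this
  have key : ∀ b, C.Adj w b → b = v ∨ b = t := by
    intro b hb
    rcases mem w b hb with rfl | rfl | h | h
    · exact absurd hb.symm huw
    · exact absurd rfl hb.ne
    · exact Or.inl h
    · exact Or.inr h
  have hx := key x ((hwN x).2 (Or.inl rfl))
  have hy := key y ((hwN y).2 (Or.inr rfl))
  have hwN' : ∀ b, C.Adj w b ↔ b = v ∨ b = t := by
    intro b; rw [hwN]; grind
  have hvN : ∀ b, C.Adj v b ↔ b = u ∨ b = w := by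
    intro b
    obtain ⟨c, hc, hN⟩ := two v u huv.symm
    have hNv : ∀ b, C.Adj v b ↔ b = u ∨ b = c := by
      intro b
      have : b ∈ C.neighborSet v ↔ b ∈ ({u, c} : Set V) := by rw [hN]
      simpa using this
    have := (hNv w).1 ((hwN' v).2 (Or.inl rfl)).symm
    rw [hNv]; grind
  have htN : ∀ b, C.Adj t b ↔ b = u ∨ b = w := by
    intro b
    obtain ⟨c, hc, hN⟩ := two t u hut.symm
    have hNv : ∀ b, C.Adj t b ↔ b = u ∨ b = c := by
      intro b
      have : b ∈ C.neighborSet t ↔ b ∈ ({u, c} : Set V) := by rw [hN]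
      simpa using this
    have := (hNv w).1 ((hwN' t).2 (Or.inr rfl)).symm
    rw [hNv]; grind
  refine ⟨w, t, hwn.1.symm, htv.symm, ?_, ?_⟩
  · ext x; rw [hverts]; simp; tauto
  · intro a b
    simp only [Set.mem_insert_iff, Set.mem_singleton_iff]
    constructor
    · intro h
      rcases mem b a h.symm with rfl | rfl | rfl | rfl
      · exact Or.inl ⟨Or.inl rfl, (huN b).1 h⟩
      · exact Or.inl ⟨Or.inr rfl, (hwN' b).1 h⟩
      · exact Or.inr ⟨(hvN b).1 h, Or.inl rfl⟩
      · exact Or.inr ⟨(htN b).1 h, Or.inr rfl⟩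
    · rintro (⟨rfl | rfl, h⟩ | ⟨h, rfl | rfl⟩)
      · exact (huN b).2 h
      · exact (hwN' b).2 h
      · exact (hvN b).2 h
      · exact (htN b).2 h

lemma exists_quad_of_mem {V : Type} {Λ : SimpleGraph V} (C : Λ.Subgraph)
    (hC : IsCycleSubgraph C) (h4 : C.verts.ncard = 4) (u : V) (hu : u ∈ C.verts) :
    ∃ w v t, Quad C u w v t := by
  obtain ⟨x, y, hxy, he⟩ := Set.ncard_eq_two.1 (hC.2 u hu)
  have hx : x ∈ C.neighborSet u := by rw [he]; simp
  obtain ⟨w, t, h⟩ := exists_quad C hC h4 u x hx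
  exact ⟨w, x, t, h⟩

lemma Quad.map {V : Type} {Λ : SimpleGraph V} {C D : Λ.Subgraph} {u w v t : V}
    (h : Quad C u w v t) (π : Equiv.Perm V) (hD : IsMapOf π C D) :
    Quad D (π u) (π w) (π v) (π t) := by
  obtain ⟨h1, h2, h3, h4⟩ := h
  refine ⟨by simpa using h1, by simpa using h2, ?_, ?_⟩
  · rw [hD.1, h3, Set.image_union, Set.image_pair, Set.image_pair]
  · intro a b
    rw [hD.2, h4]
    simp only [Set.mem_insert_iff, Set.mem_singleton_iff, Equiv.Perm.inv_eq_iff_eq]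

lemma isMapOf_of_quad {V : Type} {Λ : SimpleGraph V} {C D : Λ.Subgraph} {u w v t : V}
    (h : Quad C u w v t) (π : Equiv.Perm V) (hD : Quad D (π u) (π w) (π v) (π t)) :
    IsMapOf π C D := by
  refine ⟨?_, ?_⟩
  · rw [hD.2.2.1, h.2.2.1, Set.image_union, Set.image_pair, Set.image_pair]
  · intro a b
    rw [hD.2.2.2, h.2.2.2]
    simp only [Set.mem_insert_iff, Set.mem_singleton_iff, Equiv.Perm.inv_eq_iff_eq]

/-- `{a,b}` is at a level just below `{c,d}`, completely joined to it. -/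
def Up {r s : ℕ} (a b c d : PXV r s) : Prop :=
  pxRel r s a c ∧ pxRel r s a d ∧ pxRel r s b c ∧ pxRel r s b d

lemma zmod_two_cases : ∀ a : ZMod 2, a = 0 ∨ a = 1 := by decide

lemma zmod_two_ne : ∀ a b : ZMod 2, a ≠ b → b = a + 1 := by decide

lemma pxRel_shift {r s : ℕ} (n : Fin s → ZMod 2) (x : ZMod r) (b : ZMod 2) :
    pxRel r s (n, x) (shiftTo n b, x + 1) := by
  refine ⟨rfl, fun i h => ?_⟩
  simp [shiftTo, h]

lemma eq_shift {r s : ℕ} (hs : 0 < s) {a c : PXV r s} (h : pxRel r s a c) :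
    c = (shiftTo a.1 (c.1 ⟨s - 1, by omega⟩), a.2 + 1) := by
  refine Prod.ext ?_ h.1
  funext i
  simp only [shiftTo]
  split_ifs with hi
  · exact h.2 i hi
  · have e : i = ⟨s - 1, by omega⟩ := by
      apply Fin.ext
      have := i.2
      simp only
      omega
    rw [← e]

lemma natRight_eq {r s : ℕ} (hs : 0 < s) {a c d : PXV r s} (h : pxRel r s a c)
    (h' : pxRel r s a d) (hcd : c ≠ d) : natRight a.1 a.2 = {c, d} := by
  have e1 := eq_shift hs h
  have e2 := eq_shift hs h'
  unfold natRight
  rcases zmod_two_cases (c.1 ⟨s - 1, by omega⟩) with hc | hc <;>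
  rcases zmod_two_cases (d.1 ⟨s - 1, by omega⟩) with hd | hd <;>
  rw [hc] at e1 <;> rw [hd] at e2
  · exact absurd (e1.trans e2.symm) hcd
  · rw [← e1, ← e2]
  · rw [← e1, ← e2, Set.pair_comm]
  · exact absurd (e1.trans e2.symm) hcd

lemma natLeft_eq {r s : ℕ} (hs : 0 < s) {a b c : PXV r s} (h : pxRel r s a c)
    (h' : pxRel r s b c) (hab : a ≠ b) : natLeft hs a.1 a.2 = {a, b} := by
  unfold natLeft
  have e2 : a.2 = b.2 := by
    have := h.1.symm.trans h'.1
    exact add_right_cancel this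
  have e : ∀ i : Fin s, (i : ℕ) ≠ 0 → b.1 i = a.1 i := by
    intro i hi
    obtain ⟨i, hi'⟩ := i
    obtain ⟨j, rfl⟩ := Nat.exists_eq_succ_of_ne_zero hi
    rw [← h.2 j hi', ← h'.2 j hi']
  have e0 : a.1 ⟨0, hs⟩ ≠ b.1 ⟨0, hs⟩ := by
    intro h0
    apply hab
    refine Prod.ext ?_ e2
    funext i
    by_cases hi : (i : ℕ) = 0
    · have : i = ⟨0, hs⟩ := Fin.ext hi
      rw [this, h0]
    · exact (e i hi).symm
  have : b = (Function.update a.1 ⟨0, hs⟩ (a.1 ⟨0, hs⟩ + 1), a.2) := by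
    refine Prod.ext ?_ e2.symm
    funext i
    by_cases hi : i = ⟨0, hs⟩
    · subst hi
      simp [zmod_two_ne _ _ e0]
    · simp only [ne_eq, hi, not_false_eq_true, Function.update_of_ne]
      exact e i (fun h => hi (Fin.ext h))
  rw [← this]

lemma two_ne {r : ℕ} (hr : 3 ≤ r) : (2 : ZMod r) ≠ 0 := by
  intro h
  have : ((2 : ℕ) : ZMod r) = 0 := by exact_mod_cast h
  rw [ZMod.natCast_eq_zero_iff] at this
  have := Nat.le_of_dvd (by norm_num) this
  omega

lemma pxRel_ne {r s : ℕ} (hr : 3 ≤ r) {a b : PXV r s} (h : pxRel r s a b) : a ≠ b := by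
  rintro rfl
  have h1 : (1 : ZMod r) = 0 := by linear_combination -h.1
  exact two_ne hr (by linear_combination 2 * h1)

lemma px_adj {r s : ℕ} (hr : 3 ≤ r) {a b : PXV r s} :
    (PX r s).Adj a b ↔ pxRel r s a b ∨ pxRel r s b a := by
  unfold PX
  rw [SimpleGraph.fromRel_adj]
  constructor
  · exact fun h => h.2
  · intro h
    refine ⟨?_, h⟩
    rcases h with h | h
    · exact pxRel_ne hr h
    · exact (pxRel_ne hr h).symm

lemma natural_iff {r s : ℕ} (hs : 0 < s) {D : (PX r s).Subgraph} :
    D ∈ NaturalDecomp r s hs ↔ ∃ a b c d, Up a b c d ∧ Quad D a b c d := by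
  constructor
  · rintro ⟨n, x, h1, h2⟩
    have hne : n ≠ Function.update n ⟨0, hs⟩ (n ⟨0, hs⟩ + 1) := by
      intro h
      have := congrFun h ⟨0, hs⟩
      simp at this
    refine ⟨(n, x), (Function.update n ⟨0, hs⟩ (n ⟨0, hs⟩ + 1), x), (shiftTo n 0, x + 1),
      (shiftTo n 1, x + 1), ?_, ?_, ?_, h1, h2⟩
    · have e : ∀ b, shiftTo (Function.update n ⟨0, hs⟩ (n ⟨0, hs⟩ + 1)) b = shiftTo n b := by
        intro b
        funext i
        simp [shiftTo, Function.update]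
      refine ⟨pxRel_shift _ _ _, pxRel_shift _ _ _, ?_, ?_⟩
      · rw [← e]; exact pxRel_shift _ _ _
      · rw [← e]; exact pxRel_shift _ _ _
    · intro h; exact hne (congrArg Prod.fst h)
    · intro h
      have := congrFun (congrArg Prod.fst h) ⟨s - 1, by omega⟩
      simp [shiftTo, show ¬ (s - 1 + 1 < s) by omega] at this
  · rintro ⟨a, b, c, d, hU, hQ⟩
    refine ⟨a.1, a.2, ?_⟩
    rw [natLeft_eq hs hU.1 hU.2.2.1 hQ.1, natRight_eq hs hU.1 hU.2.1 hQ.2.1]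
    exact hQ.2.2

/-- Finishing lemma. -/
lemma finish {r s : ℕ} (hr : 3 ≤ r) (hs : 0 < s) (𝒞 : Set ((PX r s).Subgraph))
    (hdec : ∀ u v : PXV r s, (PX r s).Adj u v → ∃! C, C ∈ 𝒞 ∧ C.Adj u v)
    (π : Equiv.Perm (PXV r s))
    (hπ : ∀ u v, (PX r s).Adj (π u) (π v) ↔ (PX r s).Adj u v)
    (h : ∀ C ∈ 𝒞, ∃ u w v t, Quad C u w v t ∧ Up (π u) (π w) (π v) (π t)) :
    ∃ π : Equiv.Perm (PXV r s),
      (∀ u v, (PX r s).Adj (π u) (π v) ↔ (PX r s).Adj u v) ∧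
      (∀ D : (PX r s).Subgraph,
        (∃ C ∈ 𝒞, IsMapOf π C D) ↔ D ∈ NaturalDecomp r s hs) := by
  refine ⟨π, hπ, fun D => ⟨?_, ?_⟩⟩
  · rintro ⟨C, hC, hm⟩
    obtain ⟨u, w, v, t, hQ, hU⟩ := h C hC
    rw [natural_iff]
    exact ⟨_, _, _, _, hU, hQ.map π hm⟩
  · intro hD
    obtain ⟨a, b, c, d, hU, hQ⟩ := (natural_iff hs).1 hD
    have hadj : (PX r s).Adj (π⁻¹ a) (π⁻¹ c) := by
      rw [← hπ]
      simpa using hQ.adj.adj_sub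
    obtain ⟨C, ⟨hC, hCa⟩, -⟩ := hdec _ _ hadj
    obtain ⟨u, w, v, t, hQ', hU'⟩ := h C hC
    refine ⟨C, hC, isMapOf_of_quad hQ' π ?_⟩
    rw [hQ'.2.2.2] at hCa
    simp only [Set.mem_insert_iff, Set.mem_singleton_iff, Equiv.Perm.inv_eq_iff_eq] at hCa
    have hn1 : π u ≠ π w := by simpa using hQ'.1
    have hn2 : π v ≠ π t := by simpa using hQ'.2.1
    have hDa : D.Adj (π u) (π v) := by
      rcases hCa with ⟨h1, h2⟩ | ⟨h1, h2⟩
      · have L : ({π u, π w} : Set _) = {a, b} := by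
          rw [← natLeft_eq hs hU.1 hU.2.2.1 hQ.1]
          rcases h1 with rfl | rfl
          · rw [natLeft_eq hs hU'.1 hU'.2.2.1 hn1]
          · rw [Set.pair_comm, natLeft_eq hs hU'.2.2.1 hU'.1 hn1.symm]
        have R : ({π v, π t} : Set _) = {c, d} := by
          rw [← natRight_eq hs hU.1 hU.2.1 hQ.2.1]
          rcases h1 with rfl | rfl
          · rw [natRight_eq hs hU'.1 hU'.2.1 hn2]
          · rw [natRight_eq hs hU'.2.2.1 hU'.2.2.2 hn2]
        rw [hQ.2.2.2, ← L, ← R]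
        simp
      · exfalso
        have h3 := hU.1.1
        obtain ⟨⟨u1, -⟩, ⟨u2, -⟩, ⟨u3, -⟩, ⟨u4, -⟩⟩ := hU'
        apply two_ne hr
        rcases h1 with rfl | rfl <;> rcases h2 with rfl | rfl
        · linear_combination -h3 - u1
        · linear_combination -h3 - u2
        · linear_combination -h3 - u3
        · linear_combination -h3 - u4
    have hne : Quad D (π u) (π w) (π v) (π t) := by
      have L : natLeft hs (π u).1 (π u).2 = {π u, π w} := natLeft_eq hs hU'.1 hU'.2.2.1 hn1
      have R := natRight_eq hs hU'.1 hU'.2.1 hn2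
      refine ⟨hn1, hn2, ?_⟩
      have e := hQ.2.2
      have L2 := natLeft_eq hs hU.1 hU.2.2.1 hQ.1
      have R2 := natRight_eq hs hU.1 hU.2.1 hQ.2.1
      rw [hQ.2.2.2] at hDa
      simp only [Set.mem_insert_iff, Set.mem_singleton_iff] at hDa
      rcases hDa with ⟨h1 | h1, -⟩ | ⟨h1, h2⟩
      · rw [← L, ← R, h1, L2, R2]; exact e
      · rw [← L, ← R, h1, natLeft_eq hs hU.2.2.1 hU.1 hQ.1.symm,
          natRight_eq hs hU.2.2.1 hU.2.2.2 hQ.2.1, Set.pair_comm b a]; exact e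
      · exfalso
        have h3 := hU'.1.1
        obtain ⟨⟨u1, -⟩, ⟨u2, -⟩, ⟨u3, -⟩, ⟨u4, -⟩⟩ := hU
        apply two_ne hr
        rcases h1 with h1 | h1 <;> rcases h2 with h2 | h2 <;> rw [h1, h2] at h3
        · linear_combination -h3 - u1
        · linear_combination -h3 - u2
        · linear_combination -h3 - u3
        · linear_combination -h3 - u4
    exact hne

/-- `u v w t` winds once around. -/
def Wind {r s : ℕ} (u v w t : PXV r s) : Prop :=
  pxRel r s u v ∧ pxRel r s v w ∧ pxRel r s w t ∧ pxRel r s t u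

/-- `v`, `t` lie between `u` and `w`. -/
def Mid {r s : ℕ} (u v t w : PXV r s) : Prop :=
  pxRel r s u v ∧ pxRel r s v w ∧ pxRel r s u t ∧ pxRel r s t w

lemma classify {r s : ℕ} (hr : 3 ≤ r) {u v w t : PXV r s}
    (h1 : (PX r s).Adj u v) (h2 : (PX r s).Adj v w) (h3 : (PX r s).Adj w t)
    (h4 : (PX r s).Adj t u) :
    Up u w v t ∨ Up v t u w ∨ Wind u v w t ∨ Wind u t w v ∨
    Mid u v t w ∨ Mid w v t u ∨ Mid v u w t ∨ Mid t u w v := by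
  rw [px_adj hr] at h1 h2 h3 h4
  have h20 := two_ne hr
  unfold Up Wind Mid
  by_contra hcon
  apply h20
  rcases h1 with h1 | h1 <;> rcases h2 with h2 | h2 <;> rcases h3 with h3 | h3 <;>
    rcases h4 with h4 | h4 <;>
  first
  | (exfalso; apply hcon; simp only [h1, h2, h3, h4, and_self, true_or, or_true]; done)
  | linear_combination h1.1 + h2.1 + h3.1 - h4.1
  | linear_combination h1.1 + h2.1 - h3.1 + h4.1
  | linear_combination h1.1 - h2.1 + h3.1 + h4.1
  | linear_combination -h1.1 + h2.1 + h3.1 + h4.1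
  | linear_combination -h1.1 - h2.1 - h3.1 + h4.1
  | linear_combination -h1.1 - h2.1 + h3.1 - h4.1
  | linear_combination -h1.1 + h2.1 - h3.1 - h4.1
  | linear_combination h1.1 - h2.1 - h3.1 - h4.1

lemma four_eq {r s : ℕ} (hr : 3 ≤ r) {u v w t : PXV r s} (h : Wind u v w t) : r = 4 := by
  obtain ⟨⟨h1, -⟩, ⟨h2, -⟩, ⟨h3, -⟩, ⟨h4, -⟩⟩ := h
  have h : (4 : ZMod r) = 0 := by linear_combination -h1 - h2 - h3 - h4
  have h' : ((4 : ℕ) : ZMod r) = 0 := by exact_mod_cast h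
  rw [ZMod.natCast_eq_zero_iff] at h'
  have := Nat.le_of_dvd (by norm_num) h'
  interval_cases r <;> omega

lemma not_mid {r s : ℕ} (hs : 2 ≤ s) {u v t w : PXV r s} (hvt : v ≠ t) : ¬ Mid u v t w := by
  rintro ⟨h1, h2, h3, h4⟩
  apply hvt
  refine Prod.ext ?_ (h1.1.trans h3.1.symm)
  funext i
  obtain ⟨i, hi⟩ := i
  rcases i with _ | i
  · rw [h1.2 0 (by omega), h3.2 0 (by omega)]
  · rw [← h2.2 i hi, ← h4.2 i hi]

lemma up_or_wind {r s : ℕ} (hr : 3 ≤ r) (hs : 2 ≤ s) {C : (PX r s).Subgraph}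
    {u v w t : PXV r s} (h : Quad C u w v t) :
    Up u w v t ∨ Up v t u w ∨ Wind u v w t ∨ Wind u t w v := by
  have := classify hr h.adj.adj_sub h.left.adj.symm.adj_sub h.left.right.adj.adj_sub
    h.right.adj.symm.adj_sub
  have n1 := h.1
  have n2 := h.2.1
  rcases this with h | h | h | h | h | h | h | h
  · exact Or.inl h
  · exact Or.inr (Or.inl h)
  · exact Or.inr (Or.inr (Or.inl h))
  · exact Or.inr (Or.inr (Or.inr h))
  · exact absurd h (not_mid hs n2)
  · exact absurd h (not_mid hs n2)
  · exact absurd h (not_mid hs n1)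
  · exact absurd h (not_mid hs n1)
lemma Quad.mem {V : Type} {Λ : SimpleGraph V} {C : Λ.Subgraph} {u w v t : V}
    (h : Quad C u w v t) : u ∈ C.verts := by rw [h.2.2.1]; simp

lemma Quad.not_adj {V : Type} {Λ : SimpleGraph V} {C : Λ.Subgraph} {u w v t : V}
    (h : Quad C u w v t) : ¬ C.Adj u w := by
  have h1 := h.left.adj.ne
  have h2 := h.left.right.adj.ne
  have h3 := h.adj.ne
  have h4 := h.right.adj.ne
  rw [h.2.2.2]
  simp only [Set.mem_insert_iff, Set.mem_singleton_iff]
  tauto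

lemma Quad.antipode {V : Type} {Λ : SimpleGraph V} {C : Λ.Subgraph} {u w v t w' v' t' : V}
    (h : Quad C u w v t) (h' : Quad C u w' v' t') : w = w' := by
  have hw := h.left.mem
  rw [h'.2.2.1] at hw
  simp only [Set.mem_union, Set.mem_insert_iff, Set.mem_singleton_iff] at hw
  have hn := h.not_adj
  rcases hw with (rfl | hw) | rfl | rfl
  · exact absurd rfl h.1
  · exact hw
  · exact absurd h'.adj hn
  · exact absurd h'.right.adj hn

/-- All cycles pairwise edge-disjoint: distinct cycles at `x` use disjoint neighbours. -/
lemma quad_disjoint {V : Type} {Λ : SimpleGraph V} {𝒞 : Set Λ.Subgraph}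
    (hun : ∀ C ∈ 𝒞, ∀ D ∈ 𝒞, ∀ a b, C.Adj a b → D.Adj a b → C = D)
    {C D : Λ.Subgraph} (hC : C ∈ 𝒞) (hD : D ∈ 𝒞) (hCD : C ≠ D) {x w v t w' v' t' : V}
    (h : Quad C x w v t) (h' : Quad D x w' v' t') : v ≠ v' ∧ v ≠ t' ∧ t ≠ v' ∧ t ≠ t' := by
  refine ⟨?_, ?_, ?_, ?_⟩ <;> rintro rfl <;> apply hCD
  · exact hun C hC D hD _ _ h.adj h'.adj
  · exact hun C hC D hD _ _ h.adj h'.right.adj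
  · exact hun C hC D hD _ _ h.right.adj h'.adj
  · exact hun C hC D hD _ _ h.right.adj h'.right.adj

lemma three_up {r s : ℕ} (hs : 0 < s) {x a b c : PXV r s} (ha : pxRel r s x a)
    (hb : pxRel r s x b) (hc : pxRel r s x c) : a = b ∨ a = c ∨ b = c := by
  by_contra! h
  have e1 := natRight_eq hs ha hb h.1
  have e2 := natRight_eq hs ha hc h.2.1
  have : c ∈ ({a, b} : Set (PXV r s)) := by rw [← e1, e2]; simp
  rcases this with h' | h'
  · exact h.2.1 h'.symm
  · exact h.2.2 h'.symm

lemma three_down {r s : ℕ} (hs : 0 < s) {x a b c : PXV r s} (ha : pxRel r s a x)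
    (hb : pxRel r s b x) (hc : pxRel r s c x) : a = b ∨ a = c ∨ b = c := by
  by_contra! h
  have e1 := natLeft_eq hs ha hb h.1
  have e2 := natLeft_eq hs ha hc h.2.1
  have : c ∈ ({a, b} : Set (PXV r s)) := by rw [← e1, e2]; simp
  rcases this with h' | h'
  · exact h.2.1 h'.symm
  · exact h.2.2 h'.symm

def NatC {r s : ℕ} (C : (PX r s).Subgraph) : Prop :=
  ∃ u w v t, Quad C u w v t ∧ Up u w v t

def WindC {r s : ℕ} (f : PXV r s → ZMod 2) (τ : ZMod 2) (C : (PX r s).Subgraph) : Prop :=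
  ∃ u w v t, Quad C u w v t ∧ Wind u v w t ∧ f u + f v + f w + f t = τ

lemma root_nat {r s : ℕ} {C : (PX r s).Subgraph} (h : NatC C) {x : PXV r s}
    (hx : x ∈ C.verts) : ∃ w v t, Quad C x w v t ∧ (Up x w v t ∨ Up v t x w) := by
  obtain ⟨u, w, v, t, hQ, h1, h2, h3, h4⟩ := h
  rw [hQ.2.2.1] at hx
  simp only [Set.mem_union, Set.mem_insert_iff, Set.mem_singleton_iff] at hx
  rcases hx with (rfl | rfl) | rfl | rfl
  · exact ⟨_, _, _, hQ, Or.inl ⟨h1, h2, h3, h4⟩⟩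
  · exact ⟨_, _, _, hQ.left, Or.inl ⟨h3, h4, h1, h2⟩⟩
  · exact ⟨_, _, _, hQ.swap, Or.inr ⟨h1, h2, h3, h4⟩⟩
  · exact ⟨_, _, _, hQ.right.swap, Or.inr ⟨h2, h1, h4, h3⟩⟩

lemma root_wind {r s : ℕ} {f : PXV r s → ZMod 2} {τ : ZMod 2} {C : (PX r s).Subgraph}
    (h : WindC f τ C) {x : PXV r s} (hx : x ∈ C.verts) :
    ∃ w v t, Quad C x w v t ∧ Wind x v w t ∧ f x + f v + f w + f t = τ := by
  obtain ⟨u, w, v, t, hQ, ⟨h1, h2, h3, h4⟩, hf⟩ := h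
  rw [hQ.2.2.1] at hx
  simp only [Set.mem_union, Set.mem_insert_iff, Set.mem_singleton_iff] at hx
  rcases hx with (rfl | rfl) | rfl | rfl
  · exact ⟨_, _, _, hQ, ⟨h1, h2, h3, h4⟩, hf⟩
  · exact ⟨_, _, _, hQ.left.right, ⟨h3, h4, h1, h2⟩, by rw [← hf]; ring⟩
  · exact ⟨_, _, _, hQ.swap.right, ⟨h2, h3, h4, h1⟩, by rw [← hf]; ring⟩
  · exact ⟨_, _, _, hQ.right.swap, ⟨h4, h1, h2, h3⟩, by rw [← hf]; ring⟩

lemma nat_wind_false {r s : ℕ} (hs : 0 < s) {𝒞 : Set (PX r s).Subgraph}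
    (hun : ∀ C ∈ 𝒞, ∀ D ∈ 𝒞, ∀ a b, C.Adj a b → D.Adj a b → C = D)
    {C D : (PX r s).Subgraph} (hC : C ∈ 𝒞) (hD : D ∈ 𝒞) (hCD : C ≠ D) {x : PXV r s}
    (hx : x ∈ C.verts) (hx' : x ∈ D.verts) {f : PXV r s → ZMod 2} {τ : ZMod 2}
    (h : NatC C) (h' : WindC f τ D) : False := by
  obtain ⟨w, v, t, hQ, hU⟩ := root_nat h hx
  obtain ⟨w', v', t', hQ', ⟨h1, -, -, h4⟩, -⟩ := root_wind h' hx'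
  obtain ⟨n1, n2, n3, n4⟩ := quad_disjoint hun hC hD hCD hQ hQ'
  have n5 := hQ.2.1
  rcases hU with ⟨u1, u2, -, -⟩ | ⟨u1, -, u2, -⟩
  · rcases three_up hs u1 u2 h1 with h | h | h <;> contradiction
  · rcases three_down hs u1 u2 h4 with h | h | h <;> contradiction

lemma conn_lift {r s : ℕ} (hr : 3 ≤ r) (P : PXV r s → Prop)
    (hP : ∀ a b, pxRel r s a b → P a → P b) (v0 : PXV r s) (h0 : P v0) (x : ZMod r) :
    ∃ n, P (n, x) := by
  have hj : ∀ j : ℕ, ∃ n, P (n, v0.2 + j) := by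
    intro j
    induction j with
    | zero => exact ⟨v0.1, by simpa using h0⟩
    | succ j ih =>
      obtain ⟨n, hn⟩ := ih
      refine ⟨shiftTo n 0, ?_⟩
      have := hP _ _ (pxRel_shift n _ 0) hn
      convert this using 2
      push_cast; ring
  have : NeZero r := ⟨by omega⟩
  obtain ⟨n, hn⟩ := hj (x - v0.2).val
  refine ⟨n, ?_⟩
  simpa using hn

lemma rel2 {r : ℕ} {a b : PXV r 2} : pxRel r 2 a b ↔ b.2 = a.2 + 1 ∧ b.1 0 = a.1 1 := by
  unfold pxRel
  constructor
  · exact fun h => ⟨h.1, h.2 0 (by omega)⟩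
  · rintro ⟨h1, h2⟩
    refine ⟨h1, fun i hi => ?_⟩
    obtain rfl : i = 0 := by omega
    exact h2

lemma rel3 {r : ℕ} {a b : PXV r 3} :
    pxRel r 3 a b ↔ b.2 = a.2 + 1 ∧ b.1 0 = a.1 1 ∧ b.1 1 = a.1 2 := by
  unfold pxRel
  constructor
  · exact fun h => ⟨h.1, h.2 0 (by omega), h.2 1 (by omega)⟩
  · rintro ⟨h1, h2, h3⟩
    refine ⟨h1, fun i hi => ?_⟩
    obtain rfl | rfl : i = 0 ∨ i = 1 := by omega
    · exact h2
    · exact h3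

lemma rel1 {r : ℕ} {a b : PXV r 1} : pxRel r 1 a b ↔ b.2 = a.2 + 1 := by
  unfold pxRel
  constructor
  · exact fun h => h.1
  · exact fun h => ⟨h, fun i hi => by omega⟩

lemma conn2 {r : ℕ} (hr : 3 ≤ r) (P : PXV r 2 → Prop)
    (hP : ∀ a b, pxRel r 2 a b → P a → P b) (v0 : PXV r 2) (h0 : P v0) (v : PXV r 2) : P v := by
  obtain ⟨n, hn⟩ := conn_lift hr P hP v0 h0 (v.2 - 2)
  have h1 := hP _ (![n 1, v.1 0], v.2 - 1) (by rw [rel2]; simp; ring) hn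
  exact hP _ v (by rw [rel2]; simp) h1

lemma conn3 {r : ℕ} (hr : 3 ≤ r) (P : PXV r 3 → Prop)
    (hP : ∀ a b, pxRel r 3 a b → P a → P b) (v0 : PXV r 3) (h0 : P v0) (v : PXV r 3) : P v := by
  obtain ⟨n, hn⟩ := conn_lift hr P hP v0 h0 (v.2 - 3)
  have h1 := hP _ (![n 1, n 2, v.1 0], v.2 - 2) (by rw [rel3]; simp; ring) hn
  have h2 := hP _ (![n 2, v.1 0, v.1 1], v.2 - 1) (by rw [rel3]; simp; ring) h1
  exact hP _ v (by rw [rel3]; simp) h2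

/-- Propagation of a type of cycles. -/
lemma propagate {r s : ℕ} (hr : 3 ≤ r) {𝒞 : Set (PX r s).Subgraph}
    (hcyc : ∀ C ∈ 𝒞, IsCycleSubgraph C ∧ C.verts.ncard = 4)
    (hdec : ∀ u v : PXV r s, (PX r s).Adj u v → ∃! C, C ∈ 𝒞 ∧ C.Adj u v)
    (hconn : ∀ (P : PXV r s → Prop) (_ : ∀ a b, pxRel r s a b → P a → P b) (v0 : PXV r s)
      (_ : P v0) (v : PXV r s), P v)
    (T : (PX r s).Subgraph → Prop)
    (hT : ∀ C ∈ 𝒞, ∀ D ∈ 𝒞, C ≠ D → ∀ x, x ∈ C.verts → x ∈ D.verts → T C → T D)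
    (C₀ : (PX r s).Subgraph) (hC₀ : C₀ ∈ 𝒞) (h0 : T C₀) : ∀ C ∈ 𝒞, T C := by
  have hT' : ∀ C ∈ 𝒞, ∀ D ∈ 𝒞, ∀ x, x ∈ C.verts → x ∈ D.verts → T C → T D := by
    intro C hC D hD x hx hx' h
    by_cases e : C = D
    · rwa [← e]
    · exact hT C hC D hD e x hx hx' h
  have hne : ∀ C ∈ 𝒞, ∃ x, x ∈ C.verts := by
    intro C hC
    have := (hcyc C hC).2
    exact Set.nonempty_of_ncard_ne_zero (by omega)
  obtain ⟨x0, hx0⟩ := hne C₀ hC₀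
  have key := hconn (fun v => ∀ C ∈ 𝒞, v ∈ C.verts → T C) (by
    intro a b hab ha D hD hb
    obtain ⟨C, ⟨hC, hCa⟩, -⟩ := hdec a b ((px_adj hr).2 (Or.inl hab))
    exact hT' C hC D hD b (C.edge_vert hCa.symm) hb (ha C hC (C.edge_vert hCa)))
    x0 (fun C hC hx => hT' C₀ hC₀ C hC x0 hx0 hx h0)
  intro C hC
  obtain ⟨x, hx⟩ := hne C hC
  exact key x C hC hx

lemma nat_or_wind {r s : ℕ} (hr : 3 ≤ r) (hs : 2 ≤ s) {C : (PX r s).Subgraph}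
    (h : IsCycleSubgraph C ∧ C.verts.ncard = 4) (f : PXV r s → ZMod 2) :
    NatC C ∨ ∃ τ, WindC f τ C := by
  obtain ⟨x, hx⟩ : C.verts.Nonempty := Set.nonempty_of_ncard_ne_zero (by omega)
  obtain ⟨w, v, t, hQ⟩ := exists_quad_of_mem C h.1 h.2 x hx
  rcases up_or_wind hr hs hQ with h | h | h | h
  · exact Or.inl ⟨_, _, _, _, hQ, h⟩
  · exact Or.inl ⟨_, _, _, _, hQ.swap, h⟩
  · exact Or.inr ⟨_, _, _, _, _, hQ, h, rfl⟩
  · exact Or.inr ⟨_, _, _, _, _, hQ.right, h, rfl⟩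

lemma nat_or_all {r s : ℕ} (hr : 3 ≤ r) (hs : 2 ≤ s) {𝒞 : Set (PX r s).Subgraph}
    (hcyc : ∀ C ∈ 𝒞, IsCycleSubgraph C ∧ C.verts.ncard = 4)
    (hdec : ∀ u v : PXV r s, (PX r s).Adj u v → ∃! C, C ∈ 𝒞 ∧ C.Adj u v)
    (hun : ∀ C ∈ 𝒞, ∀ D ∈ 𝒞, ∀ a b, C.Adj a b → D.Adj a b → C = D)
    (hconn : ∀ (P : PXV r s → Prop) (_ : ∀ a b, pxRel r s a b → P a → P b) (v0 : PXV r s)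
      (_ : P v0) (v : PXV r s), P v)
    (f : PXV r s → ZMod 2)
    (hf : ∀ x v w t v' w' t' : PXV r s, Wind x v w t → Wind x v' w' t' → v ≠ v' → t ≠ t' →
      f x + f v + f w + f t = f x + f v' + f w' + f t') :
    (∀ C ∈ 𝒞, NatC C) ∨ ∃ τ, ∀ C ∈ 𝒞, WindC f τ C := by
  by_cases h : ∀ C ∈ 𝒞, NatC C
  · exact Or.inl h
  right
  push Not at h
  obtain ⟨C₀, hC₀, hn⟩ := h
  obtain ⟨τ, hτ⟩ := (nat_or_wind hr hs (hcyc C₀ hC₀) f).resolve_left hn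
  refine ⟨τ, propagate hr hcyc hdec hconn (WindC f τ) ?_ C₀ hC₀ hτ⟩
  intro C hC D hD hCD x hx hx' hT
  rcases nat_or_wind hr hs (hcyc D hD) f with hN | ⟨τ', hW⟩
  · exact (nat_wind_false (by omega) hun hD hC hCD.symm hx' hx hN hT).elim
  · obtain ⟨w, v, t, hQ, hw, e⟩ := root_wind hT hx
    obtain ⟨w', v', t', hQ', hw', e'⟩ := root_wind hW hx'
    obtain ⟨n1, n2, n3, n4⟩ := quad_disjoint hun hC hD hCD hQ hQ'
    refine ⟨x, w', v', t', hQ', hw', ?_⟩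
    rw [← e]
    exact (hf _ _ _ _ _ _ _ hw hw' n1 n4).symm

def dec2 (k : ℕ) : PXV 4 2 := (![((k / 2 : ℕ) : ZMod 2), (k : ZMod 2)], ((k / 4 : ℕ) : ZMod 4))
def enc2 (v : PXV 4 2) : ℕ := 4 * v.2.val + 2 * (v.1 0).val + (v.1 1).val
def dec3 (k : ℕ) : PXV 4 3 :=
  (![((k / 4 : ℕ) : ZMod 2), ((k / 2 : ℕ) : ZMod 2), (k : ZMod 2)], ((k / 8 : ℕ) : ZMod 4))
def enc3 (v : PXV 4 3) : ℕ := 8 * v.2.val + 4 * (v.1 0).val + 2 * (v.1 1).val + (v.1 2).val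

def tabA (v : PXV 4 2) : PXV 4 2 :=
  dec2 ([0, 11, 8, 3, 4, 12, 15, 7, 2, 9, 10, 1, 5, 13, 14, 6].getD (enc2 v) 0)
def tabB (v : PXV 4 2) : PXV 4 2 :=
  dec2 ([0, 9, 10, 3, 12, 5, 6, 15, 8, 1, 2, 11, 4, 13, 14, 7].getD (enc2 v) 0)
def tabC (v : PXV 4 3) : PXV 4 3 :=
  dec3 ([0, 18, 5, 23, 16, 2, 21, 7, 8, 24, 13, 29, 26, 10, 31, 15, 4, 17, 1, 20, 19, 6, 22, 3,
    9, 30, 12, 27, 28, 11, 25, 14].getD (enc3 v) 0)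

lemma tabA_inv : Function.Involutive tabA := by
  unfold Function.Involutive; decide +kernel
lemma tabB_inv : Function.Involutive tabB := by
  unfold Function.Involutive; decide +kernel
lemma tabC_inv : Function.Involutive tabC := by
  unfold Function.Involutive; decide +kernel

instance decRel2 (a b : PXV 4 2) : Decidable (pxRel 4 2 a b) := decidable_of_iff _ rel2.symm
instance decRel3 (a b : PXV 4 3) : Decidable (pxRel 4 3 a b) := decidable_of_iff _ rel3.symm
instance decUp2 (a b c d : PXV 4 2) : Decidable (Up a b c d) := by unfold Up; infer_instance
instance decUp3 (a b c d : PXV 4 3) : Decidable (Up a b c d) := by unfold Up; infer_instance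

lemma tabA_adj : ∀ u v, (pxRel 4 2 (tabA u) (tabA v) ∨ pxRel 4 2 (tabA v) (tabA u)) ↔
    (pxRel 4 2 u v ∨ pxRel 4 2 v u) := by decide +kernel
lemma tabB_adj : ∀ u v, (pxRel 4 2 (tabB u) (tabB v) ∨ pxRel 4 2 (tabB v) (tabB u)) ↔
    (pxRel 4 2 u v ∨ pxRel 4 2 v u) := by decide +kernel
lemma tabC_adj : ∀ u v, (pxRel 4 3 (tabC u) (tabC v) ∨ pxRel 4 3 (tabC v) (tabC u)) ↔
    (pxRel 4 3 u v ∨ pxRel 4 3 v u) := by decide +kernel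

/-- The winding cycle with letters `a b c d`. -/
def wd2 (a b : ZMod 2) (x : ZMod 4) : PXV 4 2 := (![a, b], x)
def wd3 (a b c : ZMod 2) (x : ZMod 4) : PXV 4 3 := (![a, b, c], x)

lemma tabA_up : ∀ (a b c d : ZMod 2) (x : ZMod 4), a + b + c + d = 0 →
    Up (tabA (wd2 a b x)) (tabA (wd2 c d (x + 2))) (tabA (wd2 b c (x + 1)))
      (tabA (wd2 d a (x + 3))) ∨
    Up (tabA (wd2 b c (x + 1))) (tabA (wd2 d a (x + 3))) (tabA (wd2 a b x))
      (tabA (wd2 c d (x + 2))) := by decide +kernel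
lemma tabB_up : ∀ (a b c d : ZMod 2) (x : ZMod 4), a + b + c + d = 1 →
    Up (tabB (wd2 a b x)) (tabB (wd2 c d (x + 2))) (tabB (wd2 b c (x + 1)))
      (tabB (wd2 d a (x + 3))) ∨
    Up (tabB (wd2 b c (x + 1))) (tabB (wd2 d a (x + 3))) (tabB (wd2 a b x))
      (tabB (wd2 c d (x + 2))) := by decide +kernel
lemma tabC_up : ∀ (a b c d : ZMod 2) (x : ZMod 4),
    Up (tabC (wd3 a b c x)) (tabC (wd3 c d a (x + 2))) (tabC (wd3 b c d (x + 1)))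
      (tabC (wd3 d a b (x + 3))) ∨
    Up (tabC (wd3 b c d (x + 1))) (tabC (wd3 d a b (x + 3))) (tabC (wd3 a b c x))
      (tabC (wd3 c d a (x + 2))) := by decide +kernel

lemma wd2_ext {v : PXV 4 2} {a b : ZMod 2} {x : ZMod 4} (h0 : v.1 0 = a) (h1 : v.1 1 = b)
    (h : v.2 = x) : v = wd2 a b x := by
  refine Prod.ext ?_ h
  funext i
  fin_cases i
  · exact h0
  · exact h1

lemma wd3_ext {v : PXV 4 3} {a b c : ZMod 2} {x : ZMod 4} (h0 : v.1 0 = a) (h1 : v.1 1 = b)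
    (h2 : v.1 2 = c) (h : v.2 = x) : v = wd3 a b c x := by
  refine Prod.ext ?_ h
  funext i
  fin_cases i
  · exact h0
  · exact h1
  · exact h2

lemma wind2 {u v w t : PXV 4 2} (h : Wind u v w t) :
    u = wd2 (u.1 0) (v.1 0) u.2 ∧ v = wd2 (v.1 0) (w.1 0) (u.2 + 1) ∧
    w = wd2 (w.1 0) (t.1 0) (u.2 + 2) ∧ t = wd2 (t.1 0) (u.1 0) (u.2 + 3) := by
  obtain ⟨h1, h2, h3, h4⟩ := h
  rw [rel2] at h1 h2 h3 h4
  refine ⟨wd2_ext rfl h1.2.symm rfl, wd2_ext rfl h2.2.symm h1.1,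
    wd2_ext rfl h3.2.symm ?_, wd2_ext rfl h4.2.symm ?_⟩
  · linear_combination h2.1 + h1.1
  · linear_combination h3.1 + h2.1 + h1.1

lemma wind3 {u v w t : PXV 4 3} (h : Wind u v w t) :
    u = wd3 (u.1 0) (v.1 0) (w.1 0) u.2 ∧ v = wd3 (v.1 0) (w.1 0) (t.1 0) (u.2 + 1) ∧
    w = wd3 (w.1 0) (t.1 0) (u.1 0) (u.2 + 2) ∧ t = wd3 (t.1 0) (u.1 0) (v.1 0) (u.2 + 3) := by
  obtain ⟨h1, h2, h3, h4⟩ := h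
  rw [rel3] at h1 h2 h3 h4
  obtain ⟨h1, a1, b1⟩ := h1
  obtain ⟨h2, a2, b2⟩ := h2
  obtain ⟨h3, a3, b3⟩ := h3
  obtain ⟨h4, a4, b4⟩ := h4
  refine ⟨wd3_ext rfl a1.symm (by rw [← b1, ← a2]) rfl,
    wd3_ext rfl a2.symm (by rw [← b2, ← a3]) h1,
    wd3_ext rfl a3.symm (by rw [← b3, ← a4]) ?_,
    wd3_ext rfl a4.symm (by rw [← b4, ← a1]) ?_⟩
  · linear_combination h2 + h1
  · linear_combination h3 + h2 + h1

/-- Final step in the winding case. -/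
lemma finish_wind {s : ℕ} (hs : 0 < s) (𝒞 : Set ((PX 4 s).Subgraph))
    (hdec : ∀ u v : PXV 4 s, (PX 4 s).Adj u v → ∃! C, C ∈ 𝒞 ∧ C.Adj u v)
    (tab : PXV 4 s → PXV 4 s) (hinv : Function.Involutive tab)
    (hadj : ∀ u v, (pxRel 4 s (tab u) (tab v) ∨ pxRel 4 s (tab v) (tab u)) ↔
      (pxRel 4 s u v ∨ pxRel 4 s v u))
    (f : PXV 4 s → ZMod 2) (τ : ZMod 2)
    (hup : ∀ u v w t : PXV 4 s, Wind u v w t → f u + f v + f w + f t = τ →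
      Up (tab u) (tab w) (tab v) (tab t) ∨ Up (tab v) (tab t) (tab u) (tab w))
    (h : ∀ C ∈ 𝒞, WindC f τ C) :
    ∃ π : Equiv.Perm (PXV 4 s),
      (∀ u v, (PX 4 s).Adj (π u) (π v) ↔ (PX 4 s).Adj u v) ∧
      (∀ D : (PX 4 s).Subgraph,
        (∃ C ∈ 𝒞, IsMapOf π C D) ↔ D ∈ NaturalDecomp 4 s hs) := by
  refine finish (by norm_num) hs 𝒞 hdec (hinv.toPerm tab) ?_ ?_
  · intro u v
    rw [px_adj (by norm_num), px_adj (by norm_num)]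
    exact hadj u v
  · intro C hC
    obtain ⟨u, w, v, t, hQ, hW, e⟩ := h C hC
    rcases hup u v w t hW e with h | h
    · exact ⟨u, w, v, t, hQ, h⟩
    · exact ⟨v, t, u, w, hQ.swap, h⟩

lemma finish_nat {r s : ℕ} (hr : 3 ≤ r) (hs : 0 < s) (𝒞 : Set ((PX r s).Subgraph))
    (hdec : ∀ u v : PXV r s, (PX r s).Adj u v → ∃! C, C ∈ 𝒞 ∧ C.Adj u v)
    (h : ∀ C ∈ 𝒞, NatC C) :
    ∃ π : Equiv.Perm (PXV r s),
      (∀ u v, (PX r s).Adj (π u) (π v) ↔ (PX r s).Adj u v) ∧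
      (∀ D : (PX r s).Subgraph,
        (∃ C ∈ 𝒞, IsMapOf π C D) ↔ D ∈ NaturalDecomp r s hs) :=
  finish hr hs 𝒞 hdec 1 (fun _ _ => Iff.rfl) h

lemma case_two (𝒞 : Set ((PX 4 2).Subgraph))
    (hcyc : ∀ C ∈ 𝒞, IsCycleSubgraph C ∧ C.verts.ncard = 4)
    (hdec : ∀ u v : PXV 4 2, (PX 4 2).Adj u v → ∃! C, C ∈ 𝒞 ∧ C.Adj u v)
    (hun : ∀ C ∈ 𝒞, ∀ D ∈ 𝒞, ∀ a b, C.Adj a b → D.Adj a b → C = D) :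
    ∃ π : Equiv.Perm (PXV 4 2),
      (∀ u v, (PX 4 2).Adj (π u) (π v) ↔ (PX 4 2).Adj u v) ∧
      (∀ D : (PX 4 2).Subgraph,
        (∃ C ∈ 𝒞, IsMapOf π C D) ↔ D ∈ NaturalDecomp 4 2 two_pos) := by
  rcases nat_or_all (by norm_num) le_rfl hcyc hdec hun (conn2 (by norm_num)) (fun v => v.1 0) (by
    intro x v w t v' w' t' h h' n1 n2
    obtain ⟨e1, e2, e3, e4⟩ := wind2 h
    obtain ⟨e1', e2', e3', e4'⟩ := wind2 h'
    have hv : v.1 0 = v'.1 0 := by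
      have := e1.symm.trans e1'
      simpa [wd2] using this
    have hw : w.1 0 ≠ w'.1 0 := by
      intro hw; apply n1; rw [e2, e2', hv, hw]
    have ht : t.1 0 ≠ t'.1 0 := by
      intro ht; apply n2; rw [e4, e4', ht]
    rw [zmod_two_ne _ _ hw, zmod_two_ne _ _ ht, hv]
    have : (2 : ZMod 2) = 0 := rfl
    linear_combination -this) with h | ⟨τ, h⟩
  · exact finish_nat (by norm_num) _ 𝒞 hdec h
  · rcases zmod_two_cases τ with rfl | rfl
    · refine finish_wind _ 𝒞 hdec tabA tabA_inv tabA_adj _ 0 ?_ h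
      intro u v w t hW e
      have := tabA_up (u.1 0) (v.1 0) (w.1 0) (t.1 0) u.2 e
      obtain ⟨e1, e2, e3, e4⟩ := wind2 hW
      rwa [← e1, ← e2, ← e3, ← e4] at this
    · refine finish_wind _ 𝒞 hdec tabB tabB_inv tabB_adj _ 1 ?_ h
      intro u v w t hW e
      have := tabB_up (u.1 0) (v.1 0) (w.1 0) (t.1 0) u.2 e
      obtain ⟨e1, e2, e3, e4⟩ := wind2 hW
      rwa [← e1, ← e2, ← e3, ← e4] at this

lemma case_three (𝒞 : Set ((PX 4 3).Subgraph))
    (hcyc : ∀ C ∈ 𝒞, IsCycleSubgraph C ∧ C.verts.ncard = 4)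
    (hdec : ∀ u v : PXV 4 3, (PX 4 3).Adj u v → ∃! C, C ∈ 𝒞 ∧ C.Adj u v)
    (hun : ∀ C ∈ 𝒞, ∀ D ∈ 𝒞, ∀ a b, C.Adj a b → D.Adj a b → C = D) :
    ∃ π : Equiv.Perm (PXV 4 3),
      (∀ u v, (PX 4 3).Adj (π u) (π v) ↔ (PX 4 3).Adj u v) ∧
      (∀ D : (PX 4 3).Subgraph,
        (∃ C ∈ 𝒞, IsMapOf π C D) ↔ D ∈ NaturalDecomp 4 3 three_pos) := by
  rcases nat_or_all (by norm_num) (by norm_num) hcyc hdec hun (conn3 (by norm_num))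
    (fun v => 0) (by intros; rfl) with h | ⟨τ, h⟩
  · exact finish_nat (by norm_num) _ 𝒞 hdec h
  · refine finish_wind _ 𝒞 hdec tabC tabC_inv tabC_adj _ τ ?_ h
    intro u v w t hW e
    have := tabC_up (u.1 0) (v.1 0) (w.1 0) (t.1 0) u.2
    obtain ⟨e1, e2, e3, e4⟩ := wind3 hW
    rwa [← e1, ← e2, ← e3, ← e4] at this
lemma no_mid_one {r : ℕ} (hr : 3 ≤ r) (hr4 : r ≠ 4) (𝒞 : Set ((PX r 1).Subgraph))
    (hun : ∀ C ∈ 𝒞, ∀ D ∈ 𝒞, ∀ a b, C.Adj a b → D.Adj a b → C = D)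
    (G : Subgroup (Equiv.Perm (PXV r 1)))
    (hG1 : ∀ g ∈ G, ∀ u v, (PX r 1).Adj (g u) (g v) ↔ (PX r 1).Adj u v)
    (hG2 : ∀ u v u' v' : PXV r 1, (PX r 1).Adj u v → (PX r 1).Adj u' v' →
        ∃ g ∈ G, g u = u' ∧ g v = v')
    (hG3 : ∀ g ∈ G, ∀ C ∈ 𝒞, ∃ D ∈ 𝒞, IsMapOf g C D)
    (C : (PX r 1).Subgraph) (hC : C ∈ 𝒞) (u w v t : PXV r 1) (hQ : Quad C u w v t) :
    ¬ Mid u v t w := by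
  rintro ⟨h1, h2, h3, h4⟩
  rw [rel1] at h1 h2 h3 h4
  obtain ⟨g, hg, hgu, hgv⟩ := hG2 u v v w hQ.adj.adj_sub hQ.left.adj.symm.adj_sub
  obtain ⟨D, hD, hm⟩ := hG3 g hg C hC
  have hQ' := hQ.map g hm
  rw [hgu, hgv] at hQ'
  obtain rfl := hun C hC D hD v w hQ.left.adj.symm hQ'.adj
  have hgw : g w = t := hQ'.antipode hQ.swap
  have a1 : (PX r 1).Adj w (0, w.2 + 1) := by
    rw [px_adj hr, rel1]; exact Or.inl rfl
  rw [← hG1 g hg, hgw] at a1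
  have a2 : (PX r 1).Adj (g u) (g (0, w.2 + 1)) := by
    rw [hgu, px_adj hr, rel1, rel1]
    rw [px_adj hr, rel1, rel1] at a1
    have : v.2 = t.2 := h1.trans h3.symm
    rwa [this]
  rw [hG1 g hg, px_adj hr, rel1, rel1] at a2
  simp only at a2
  rcases a2 with a2 | a2
  · exact two_ne hr (by linear_combination a2 - h2 - h1)
  · have h : (4 : ZMod r) = 0 := by linear_combination -a2 - h2 - h1
    have h' : ((4 : ℕ) : ZMod r) = 0 := by exact_mod_cast h
    rw [ZMod.natCast_eq_zero_iff] at h'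
    have := Nat.le_of_dvd (by norm_num) h'
    interval_cases r <;> omega

/-- The side of a vertex in `PX 4 1`, which is complete bipartite. -/
def side (v : PXV 4 1) : Bool := v.2 = 0 ∨ v.2 = 2

lemma side_aux : ∀ x y : ZMod 4, (y = x + 1 ∨ x = y + 1) ↔
    (decide (x = 0 ∨ x = 2) ≠ decide (y = 0 ∨ y = 2)) := by decide

lemma adj_side {a b : PXV 4 1} : (PX 4 1).Adj a b ↔ side a ≠ side b := by
  rw [px_adj (by norm_num), rel1, rel1]
  exact side_aux a.2 b.2

lemma side_card : ∀ k : Bool, (Finset.univ.filter (fun v : PXV 4 1 => side v = k)).card = 4 := by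
  decide +kernel

lemma five {a b c d e : PXV 4 1} (hb : side b = side a) (hc : side c = side a)
    (hd : side d = side a) (he : side e = side a)
    (h1 : a ≠ b) (h2 : a ≠ c) (h3 : a ≠ d) (h4 : b ≠ c) (h5 : b ≠ d) (h6 : c ≠ d) :
    e = a ∨ e = b ∨ e = c ∨ e = d := by
  by_contra! h
  have hsub : ({e, a, b, c, d} : Finset (PXV 4 1)) ⊆
      Finset.univ.filter (fun v : PXV 4 1 => side v = side a) := by
    intro x hx
    simp only [Finset.mem_insert, Finset.mem_singleton] at hx
    simp only [Finset.mem_filter, Finset.mem_univ, true_and]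
    rcases hx with rfl | rfl | rfl | rfl | rfl <;> first | rfl | assumption
  have := Finset.card_le_card hsub
  rw [side_card] at this
  rw [Finset.card_insert_of_notMem (by simp [h]), Finset.card_insert_of_notMem (by simp [h1, h2, h3]),
    Finset.card_insert_of_notMem (by simp [h4, h5]), Finset.card_insert_of_notMem (by simp [h6]),
    Finset.card_singleton] at this
  omega

lemma quad_side {C : (PX 4 1).Subgraph} {u w v t : PXV 4 1} (h : Quad C u w v t) :
    side w = side u ∧ side v = !side u ∧ side t = !side u := by
  have h1 := adj_side.1 h.adj.adj_sub
  have h2 := adj_side.1 h.right.adj.adj_sub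
  have h3 := adj_side.1 h.left.adj.adj_sub
  revert h1 h2 h3
  cases side u <;> cases side v <;> cases side w <;> cases side t <;> simp

lemma one_antipode (𝒞 : Set ((PX 4 1).Subgraph))
    (hun : ∀ C ∈ 𝒞, ∀ D ∈ 𝒞, ∀ a b, C.Adj a b → D.Adj a b → C = D)
    (G : Subgroup (Equiv.Perm (PXV 4 1)))
    (hG2 : ∀ u v u' v' : PXV 4 1, (PX 4 1).Adj u v → (PX 4 1).Adj u' v' →
        ∃ g ∈ G, g u = u' ∧ g v = v')
    (hG3 : ∀ g ∈ G, ∀ C ∈ 𝒞, ∃ D ∈ 𝒞, IsMapOf g C D)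
    (C D : (PX 4 1).Subgraph) (hC : C ∈ 𝒞) (hD : D ∈ 𝒞) (u w v t w' v' t' : PXV 4 1)
    (hQ : Quad C u w v t) (hQ' : Quad D u w' v' t') : w = w' := by
  by_contra hww
  have hCD : C ≠ D := by
    rintro rfl
    exact hww (hQ.antipode hQ')
  obtain ⟨n1, n2, n3, n4⟩ := quad_disjoint hun hC hD hCD hQ hQ'
  obtain ⟨s1, s2, s3⟩ := quad_side hQ
  obtain ⟨s1', s2', s3'⟩ := quad_side hQ'
  obtain ⟨g, hg, hgu, hgv⟩ := hG2 u v v u hQ.adj.adj_sub hQ.adj.symm.adj_sub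
  obtain ⟨F, hF, hmF⟩ := hG3 g hg C hC
  obtain ⟨E, hE, hmE⟩ := hG3 g hg D hD
  have hQF := hQ.map g hmF
  have hQE := hQ'.map g hmE
  rw [hgu, hgv] at hQF
  rw [hgu] at hQE
  obtain rfl := hun C hC F hF u v hQ.adj hQF.adj.symm
  have hgw : g w = t := hQF.antipode hQ.swap
  have m1 : g w' ≠ t := by
    rw [← hgw]; intro h; exact hww (g.injective h).symm
  have m2 : g w' ≠ v := hQE.1.symm
  obtain ⟨q1, q2, q3⟩ := quad_side hQE
  have hEC : C ≠ E := by
    rintro rfl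
    exact m1 (hQE.antipode hQ.swap)
  obtain ⟨k1, k2, k3, k4⟩ := quad_disjoint hun hC hE hEC hQ.swap hQE
  have f1 := five (a := v) (b := t) (c := v') (d := t') (e := g w') (by rw [s3, s2])
    (by rw [s2', s2]) (by rw [s3', s2]) q1 hQ.2.1 n1 n2 n3 n4 hQ'.2.1
  have f2 := five (a := u) (b := w) (c := g v') (d := g t') (e := w') s1
    (by rw [q2, s2, Bool.not_not]) (by rw [q3, s2, Bool.not_not]) s1' hQ.1 k1 k2 k3 k4 hQE.2.1
  have f1' : g w' = v' ∨ g w' = t' := by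
    rcases f1 with h | h | h | h
    · exact absurd h m2
    · exact absurd h m1
    · exact Or.inl h
    · exact Or.inr h
  have f2' : w' = g v' ∨ w' = g t' := by
    rcases f2 with h | h | h | h
    · exact absurd h.symm hQ'.1
    · exact absurd h.symm hww
    · exact Or.inl h
    · exact Or.inr h
  have hDa : D.Adj (g w') w' := by
    rcases f1' with h | h <;> rw [h]
    · exact hQ'.left.adj.symm
    · exact hQ'.left.right.adj.symm
  have hEa : E.Adj (g w') w' := by
    have a1 := hQE.left.adj
    have a2 := hQE.left.right.adj
    rcases f2' with h | h
    · rwa [← h] at a1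
    · rwa [← h] at a2
  obtain rfl := hun D hD E hE _ _ hDa hEa
  have hv := hQE.mem
  rw [hQ'.2.2.1] at hv
  simp only [Set.mem_union, Set.mem_insert_iff, Set.mem_singleton_iff] at hv
  rcases hv with (h | h) | h | h
  · rw [h] at s2; simp at s2
  · rw [h, s1'] at s2; simp at s2
  · exact n1 h
  · exact n2 h

lemma side_swap {a b : PXV 4 1} (h : side a = side b) (v : PXV 4 1) :
    side (Equiv.swap a b v) = side v := by
  rw [Equiv.swap_apply_def]
  split_ifs with h1 h2
  · rw [h1, h]
  · rw [h2, h]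
  · rfl

lemma level_cases : ∀ (y : PXV 4 1) (k : ZMod 4),
    y.2 = k ↔ y = ((fun _ => 0 : Fin 1 → ZMod 2), k) ∨ y = ((fun _ => 1 : Fin 1 → ZMod 2), k) := by
  decide +kernel

lemma swap_level {p q a v : PXV 4 1} (hpq : p ≠ q) (hap : a ≠ p)
    (hl : ∀ y : PXV 4 1, y.2 = p.2 ↔ y = p ∨ y = q) :
    (Equiv.swap q a v).2 = p.2 ↔ v = p ∨ v = a := by
  rw [hl, Equiv.swap_apply_eq_iff, Equiv.swap_apply_eq_iff, Equiv.swap_apply_left,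
    Equiv.swap_apply_of_ne_of_ne hpq hap.symm]

lemma level_eq_aux : ∀ x y : ZMod 4, decide (x = 0 ∨ x = 2) = decide (y = 0 ∨ y = 2) →
    (x = 0 ↔ y = 0) → (x = 1 ↔ y = 1) → x = y := by decide

lemma case_one (𝒞 : Set ((PX 4 1).Subgraph))
    (hcyc : ∀ C ∈ 𝒞, IsCycleSubgraph C ∧ C.verts.ncard = 4)
    (hdec : ∀ u v : PXV 4 1, (PX 4 1).Adj u v → ∃! C, C ∈ 𝒞 ∧ C.Adj u v)
    (hun : ∀ C ∈ 𝒞, ∀ D ∈ 𝒞, ∀ a b, C.Adj a b → D.Adj a b → C = D)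
    (G : Subgroup (Equiv.Perm (PXV 4 1)))
    (hG2 : ∀ u v u' v' : PXV 4 1, (PX 4 1).Adj u v → (PX 4 1).Adj u' v' →
        ∃ g ∈ G, g u = u' ∧ g v = v')
    (hG3 : ∀ g ∈ G, ∀ C ∈ 𝒞, ∃ D ∈ 𝒞, IsMapOf g C D) :
    ∃ π : Equiv.Perm (PXV 4 1),
      (∀ u v, (PX 4 1).Adj (π u) (π v) ↔ (PX 4 1).Adj u v) ∧
      (∀ D : (PX 4 1).Subgraph,
        (∃ C ∈ 𝒞, IsMapOf π C D) ↔ D ∈ NaturalDecomp 4 1 one_pos) := by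
  have hanti := one_antipode 𝒞 hun G hG2 hG3
  have hex : ∀ u : PXV 4 1, ∃ w, ∃ C ∈ 𝒞, ∃ v t, Quad C u w v t := by
    intro u
    obtain ⟨C, ⟨hC, hCa⟩, -⟩ := hdec u (u.1, u.2 + 1)
      ((px_adj (by norm_num)).2 (Or.inl (rel1.2 rfl)))
    obtain ⟨w, t, hQ⟩ := exists_quad C (hcyc C hC).1 (hcyc C hC).2 _ _ hCa
    exact ⟨w, C, hC, _, _, hQ⟩
  choose σ hσ using hex
  have hσu : ∀ C ∈ 𝒞, ∀ u w v t, Quad C u w v t → w = σ u := by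
    intro C hC u w v t hQ
    obtain ⟨D, hD, v', t', hQ'⟩ := hσ u
    exact hanti C D hC hD _ _ _ _ _ _ _ hQ hQ'
  have hne : ∀ u, σ u ≠ u := by
    intro u
    obtain ⟨D, hD, v', t', hQ'⟩ := hσ u
    exact hQ'.1.symm
  have hss : ∀ u, σ (σ u) = u := by
    intro u
    obtain ⟨D, hD, v', t', hQ'⟩ := hσ u
    exact (hσu D hD _ _ _ _ hQ'.left).symm
  have hside : ∀ u, side (σ u) = side u := by
    intro u
    obtain ⟨D, hD, v', t', hQ'⟩ := hσ u
    exact (quad_side hQ').1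
  obtain ⟨p, hp⟩ : ∃ p : PXV 4 1, p = ((fun _ => 0), 0) := ⟨_, rfl⟩
  obtain ⟨q, hq⟩ : ∃ q : PXV 4 1, q = ((fun _ => 1), 0) := ⟨_, rfl⟩
  obtain ⟨p', hp'⟩ : ∃ p : PXV 4 1, p = ((fun _ => 0), 1) := ⟨_, rfl⟩
  obtain ⟨q', hq'⟩ : ∃ q : PXV 4 1, q = ((fun _ => 1), 1) := ⟨_, rfl⟩
  have hpq : p ≠ q := by rw [hp, hq]; decide
  have hpq' : p' ≠ q' := by rw [hp', hq']; decide
  have hl : ∀ y : PXV 4 1, y.2 = p.2 ↔ y = p ∨ y = q := by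
    intro y; rw [hp, hq]; exact level_cases y 0
  have hl' : ∀ y : PXV 4 1, y.2 = p'.2 ↔ y = p' ∨ y = q' := by
    intro y; rw [hp', hq']; exact level_cases y 1
  have sp : side p = true := by rw [hp]; decide
  have sq : side q = true := by rw [hq]; decide
  have sp' : side p' = false := by rw [hp']; decide
  have sq' : side q' = false := by rw [hq']; decide
  have p2 : p.2 = 0 := by rw [hp]
  have p2' : p'.2 = 1 := by rw [hp']
  set π : Equiv.Perm (PXV 4 1) := Equiv.swap q (σ p) * Equiv.swap q' (σ p') with hπ
  have e1 : side q = side (σ p) := by rw [hside, sp, sq]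
  have e2 : side q' = side (σ p') := by rw [hside, sp', sq']
  have hπs : ∀ v, side (π v) = side v := by
    intro v
    rw [hπ, Equiv.Perm.mul_apply, side_swap e1, side_swap e2]
  have ne_of_side : ∀ {a b : PXV 4 1}, side a ≠ side b → a ≠ b := by
    intro a b h h'; exact h (by rw [h'])
  have hπ0 : ∀ v, side v = true → π v = Equiv.swap q (σ p) v := by
    intro v hv
    rw [hπ, Equiv.Perm.mul_apply]
    congr 1
    apply Equiv.swap_apply_of_ne_of_ne
    · apply ne_of_side; rw [hv, sq']; decide
    · apply ne_of_side; rw [hv, ← e2, sq']; decide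
  have hπ1 : ∀ v, side v = false → π v = Equiv.swap q' (σ p') v := by
    intro v hv
    rw [hπ, Equiv.Perm.mul_apply]
    apply Equiv.swap_apply_of_ne_of_ne
    · apply ne_of_side; rw [side_swap e2, hv, sq]; decide
    · apply ne_of_side; rw [side_swap e2, hv, ← e1, sq]; decide
  have hσeq : ∀ a v, (σ v = a ∨ σ v = σ a) ↔ (v = a ∨ v = σ a) := by
    intro a v
    constructor
    · rintro (h | h)
      · right; rw [← h, hss]
      · left; rw [← hss v, h, hss]
    · rintro (h | h)
      · right; rw [h]
      · left; rw [h, hss]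
  have lev0 : ∀ x : PXV 4 1, side x = true → x.2 ≠ 1 := by
    intro x hx h
    unfold side at hx
    rw [h] at hx
    revert hx; decide
  have lev1 : ∀ x : PXV 4 1, side x = false → x.2 ≠ 0 := by
    intro x hx h
    unfold side at hx
    rw [h] at hx
    revert hx; decide
  have hlev : ∀ v, (π (σ v)).2 = (π v).2 := by
    intro v
    have hs1 : side (π (σ v)) = side (π v) := by rw [hπs, hπs, hside]
    rcases hb : side v with _ | _
    · refine level_eq_aux _ _ hs1 ?_ ?_
      · have a1 := lev1 (π (σ v)) (by rw [hπs, hside, hb])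
        have a2 := lev1 (π v) (by rw [hπs, hb])
        tauto
      · rw [hπ1 v hb, hπ1 (σ v) (by rw [hside, hb]), ← p2',
          swap_level hpq' (hne p') hl', swap_level hpq' (hne p') hl']
        exact hσeq p' v
    · refine level_eq_aux _ _ hs1 ?_ ?_
      · rw [hπ0 v hb, hπ0 (σ v) (by rw [hside, hb]), ← p2,
          swap_level hpq (hne p) hl, swap_level hpq (hne p) hl]
        exact hσeq p v
      · have a1 := lev0 (π (σ v)) (by rw [hπs, hside, hb])
        have a2 := lev0 (π v) (by rw [hπs, hb])
        tauto
  refine finish (by norm_num) _ 𝒞 hdec π ?_ ?_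
  · intro u v
    rw [adj_side, adj_side, hπs, hπs]
  · intro C hC
    obtain ⟨x, hx⟩ : C.verts.Nonempty :=
      Set.nonempty_of_ncard_ne_zero (by rw [(hcyc C hC).2]; norm_num)
    obtain ⟨w, v, t, hQ⟩ := exists_quad_of_mem C (hcyc C hC).1 (hcyc C hC).2 x hx
    have hw := hσu C hC _ _ _ _ hQ
    have ht := hσu C hC _ _ _ _ hQ.swap
    have hadj : (PX 4 1).Adj (π x) (π v) := by
      rw [adj_side, hπs, hπs, ← adj_side]
      exact hQ.adj.adj_sub
    have l1 := hlev x
    have l2 := hlev v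
    rw [← hw] at l1
    rw [← ht] at l2
    rw [px_adj (by norm_num), rel1, rel1] at hadj
    rcases hadj with h | h
    · refine ⟨x, w, v, t, hQ, ?_⟩
      unfold Up
      rw [rel1, rel1, rel1, rel1, l1, l2]
      exact ⟨h, h, h, h⟩
    · refine ⟨v, t, x, w, hQ.swap, ?_⟩
      unfold Up
      rw [rel1, rel1, rel1, rel1, l1, l2]
      exact ⟨h, h, h, h⟩

theorem stmt3 (r s : ℕ) (hr : 3 ≤ r) (hs : 1 ≤ s) (hsr : s ≤ r - 1)
    (𝒞 : Set ((PX r s).Subgraph))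
    (hcyc : ∀ C ∈ 𝒞, IsCycleSubgraph C ∧ C.verts.ncard = 4)
    (hdec : ∀ u v : PXV r s, (PX r s).Adj u v → ∃! C, C ∈ 𝒞 ∧ C.Adj u v)
    (hat : ∃ G : Subgroup (Equiv.Perm (PXV r s)),
      (∀ g ∈ G, ∀ u v, (PX r s).Adj (g u) (g v) ↔ (PX r s).Adj u v) ∧
      (∀ u v u' v' : PXV r s, (PX r s).Adj u v → (PX r s).Adj u' v' →
        ∃ g ∈ G, g u = u' ∧ g v = v') ∧
      (∀ g ∈ G, ∀ C ∈ 𝒞, ∃ D ∈ 𝒞, IsMapOf g C D)) :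
    ∃ π : Equiv.Perm (PXV r s),
      (∀ u v, (PX r s).Adj (π u) (π v) ↔ (PX r s).Adj u v) ∧
      (∀ D : (PX r s).Subgraph,
        (∃ C ∈ 𝒞, IsMapOf π C D) ↔ D ∈ NaturalDecomp r s hs) := by
  have hun : ∀ C ∈ 𝒞, ∀ D ∈ 𝒞, ∀ a b, C.Adj a b → D.Adj a b → C = D := by
    intro C hC D hD a b h1 h2
    exact (hdec a b h1.adj_sub).unique ⟨hC, h1⟩ ⟨hD, h2⟩
  obtain ⟨G, hG1, hG2, hG3⟩ := hat
  by_cases hr4 : r = 4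
  · subst hr4
    obtain rfl | rfl | rfl : s = 1 ∨ s = 2 ∨ s = 3 := by omega
    · exact case_one 𝒞 hcyc hdec hun G hG2 hG3
    · exact case_two 𝒞 hcyc hdec hun
    · exact case_three 𝒞 hcyc hdec hun
  · refine finish_nat hr hs 𝒞 hdec ?_
    intro C hC
    obtain ⟨x, hx⟩ : C.verts.Nonempty :=
      Set.nonempty_of_ncard_ne_zero (by rw [(hcyc C hC).2]; norm_num)
    obtain ⟨w, v, t, hQ⟩ := exists_quad_of_mem C (hcyc C hC).1 (hcyc C hC).2 x hx
    by_cases hs2 : 2 ≤ s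
    · rcases up_or_wind hr hs2 hQ with h | h | h | h
      · exact ⟨_, _, _, _, hQ, h⟩
      · exact ⟨_, _, _, _, hQ.swap, h⟩
      · exact absurd (four_eq hr h) hr4
      · exact absurd (four_eq hr h) hr4
    · obtain rfl : s = 1 := by omega
      have nm := no_mid_one hr hr4 𝒞 hun G hG1 hG2 hG3 C hC
      rcases classify hr hQ.adj.adj_sub hQ.left.adj.symm.adj_sub hQ.left.right.adj.adj_sub
        hQ.right.adj.symm.adj_sub with h | h | h | h | h | h | h | h
      · exact ⟨_, _, _, _, hQ, h⟩
      · exact ⟨_, _, _, _, hQ.swap, h⟩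
      · exact absurd (four_eq hr h) hr4
      · exact absurd (four_eq hr h) hr4
      · exact absurd h (nm _ _ _ _ hQ)
      · exact absurd h (nm _ _ _ _ hQ.left)
      · exact absurd h (nm _ _ _ _ hQ.swap)
      · exact absurd h (nm _ _ _ _ hQ.swap.left)

end Stmt3
end

section
/- Let Γ be a finite connected cubic G-vertex-transitive graph, and suppose the socle of G is a direct product T_1 × ⋯ × T_t of t nonabelian simple groups. Then G contains a subgroup that is semiregular on the vertices of Γ and has order at least 5^t. -/
/- STATEMENT 16:
Let Γ be a finite connected cubic G-vertex-transitive graph, and suppose the socle of G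
is a direct product T₁ × ⋯ × T_t of t nonabelian simple groups. Then G contains a
subgroup that is semiregular on the vertices of Γ and has order at least 5^t. -/

namespace Stmt16

/-- A minimal normal subgroup: a nontrivial normal subgroup containing no nontrivial
proper normal subgroup of the ambient group. -/
def IsMinimalNormal {H : Type} [Group H] (N : Subgroup H) : Prop :=
  N.Normal ∧ N ≠ ⊥ ∧ ∀ M : Subgroup H, M.Normal → M ≤ N → M = ⊥ ∨ M = N

/-- The socle of a group: the subgroup generated by its minimal normal subgroups. -/
def socle (H : Type) [Group H] : Subgroup H :=
  sSup {N : Subgroup H | IsMinimalNormal N}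

/-- A set of permutations is semiregular if only the identity fixes a point. -/
def Semiregular {V : Type} (N : Subgroup (Equiv.Perm V)) : Prop :=
  ∀ n ∈ N, ∀ v : V, n v = v → n = 1

section
open Polynomial

lemma exists_eq_of_isIntegral {d n : ℕ} (hd : 0 < d) (hn : 0 < n) (f : Fin d → ℂ)
    (hf : ∀ i, f i ^ n = 1) (hint : IsIntegral ℤ ((∑ i, f i) / (d : ℂ)))
    (h0 : ∑ i, f i ≠ 0) : ∃ s, ∀ i, f i = s := by
  have hd' : (d : ℂ) ≠ 0 := by exact_mod_cast hd.ne'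
  let K : IntermediateField ℚ ℂ := IntermediateField.adjoin ℚ (Set.range f)
  have : FiniteDimensional ℚ K := by
    apply IntermediateField.finiteDimensional_adjoin
    rintro _ ⟨i, rfl⟩
    have : IsIntegral ℚ (f i ^ n) := by rw [hf]; exact isIntegral_one
    exact this.of_pow hn
  have : NumberField K := ⟨⟩
  let g : Fin d → K := fun i => ⟨f i, IntermediateField.subset_adjoin _ _ ⟨i, rfl⟩⟩
  have hg : ∀ i, g i ^ n = 1 := fun i => Subtype.ext (by simpa [g] using hf i)
  let x : K := (∑ i, g i) / (d : K)
  have hx : (x : ℂ) = (∑ i, f i) / (d : ℂ) := by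
    simp [x, g]
  have hxi : IsIntegral ℤ x := by
    rw [← hx] at hint
    exact (isIntegral_algebraMap_iff (B := ℂ) (algebraMap K ℂ).injective).1 hint
  have hx0 : x ≠ 0 := by
    intro h
    apply h0
    have : (x : ℂ) = 0 := by rw [h]; rfl
    rw [hx] at this
    simpa [hd'] using this
  have hle : ∀ φ : K →+* ℂ, ‖φ x‖ ≤ 1 := by
    intro φ
    simp only [x, map_div₀, map_sum, map_natCast, norm_div, Complex.norm_natCast]
    rw [div_le_one (by exact_mod_cast hd)]
    refine (norm_sum_le _ _).trans ?_
    have : ∀ i, ‖φ (g i)‖ = 1 := fun i =>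
      Complex.norm_eq_one_of_pow_eq_one (n := n) (by rw [← map_pow, hg, map_one]) hn.ne'
    simp [this]
  obtain ⟨m, hm, hxm⟩ := NumberField.Embeddings.pow_eq_one_of_norm_le_one K ℂ hx0 hxi hle
  set s : ℂ := (∑ i, f i) / (d : ℂ) with hs
  have hsm : s ^ m = 1 := by
    rw [← hx]; exact_mod_cast congrArg (Subtype.val) hxm
  have hs1 : ‖s‖ = 1 := Complex.norm_eq_one_of_pow_eq_one hsm hm.ne'
  have hss : (starRingEnd ℂ) s * s = 1 := by
    rw [mul_comm, Complex.mul_conj, Complex.normSq_eq_norm_sq, hs1]; simp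
  have hn1 : ∀ i, ‖(starRingEnd ℂ) s * f i‖ = 1 := fun i => by
    rw [norm_mul, RCLike.norm_conj, hs1, Complex.norm_eq_one_of_pow_eq_one (hf i) hn.ne', one_mul]
  have hre : ∀ i, ((starRingEnd ℂ) s * f i).re ≤ 1 := fun i => by
    rw [← hn1 i]; exact Complex.re_le_norm _
  have hsum : ∑ i, ((starRingEnd ℂ) s * f i).re = ∑ i : Fin d, (1 : ℝ) := by
    rw [← Complex.re_sum, ← Finset.mul_sum]
    have : ∑ i, f i = d * s := by rw [hs]; field_simp
    rw [this, mul_left_comm, hss]; simp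
  refine ⟨s, fun i => ?_⟩
  have h1 := (Finset.sum_eq_sum_iff_of_le (fun i _ => hre i)).1 hsum i (Finset.mem_univ _)
  have h2 : (starRingEnd ℂ) s * f i = 1 := by
    have h3 := hn1 i
    have h4 := Complex.sq_norm_sub_sq_re ((starRingEnd ℂ) s * f i)
    rw [h3, h1] at h4
    apply Complex.ext
    · simpa using h1
    · simp only [Complex.one_im]; nlinarith
  calc f i = ((starRingEnd ℂ) s * s) * f i := by rw [hss, one_mul]
    _ = s * ((starRingEnd ℂ) s * f i) := by ring
    _ = s := by rw [h2, mul_one]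

lemma roots_pow {d n : ℕ} (M : Matrix (Fin d) (Fin d) ℂ) (hM : M ^ n = 1) (z : ℂ)
    (hz : z ∈ M.charpoly.roots) : z ^ n = 1 := by
  have h1 : z ∈ spectrum ℂ M := by
    rw [Matrix.mem_spectrum_iff_isRoot_charpoly]
    exact isRoot_of_mem_roots hz
  have h2 : z ^ n ∈ spectrum ℂ (M ^ n) := spectrum.pow_mem_pow M n h1
  rw [hM] at h2
  have : Nonempty (Fin d) := by
    by_contra h
    rw [not_nonempty_iff] at h
    have := spectrum.of_subsingleton (R := ℂ) M
    rw [this] at h1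
    exact h1
  simpa [spectrum.one_eq] using h2

lemma trace_as_sum {d n : ℕ} (M : Matrix (Fin d) (Fin d) ℂ) (hM : M ^ n = 1) :
    ∃ f : Fin d → ℂ, (∀ i, f i ^ n = 1) ∧ M.trace = ∑ i, f i ∧
      M.charpoly = ∏ i, (X - C (f i)) := by
  have hc : M.charpoly.roots.card = d := by
    rw [← (IsAlgClosed.splits M.charpoly).natDegree_eq_card_roots, Matrix.charpoly_natDegree_eq_dim]
    simp
  have hr := roots_pow M hM
  have ht := Matrix.trace_eq_sum_roots_charpoly M
  have hp := (IsAlgClosed.splits M.charpoly).eq_prod_roots_of_monic M.charpoly_monic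
  generalize M.charpoly.roots = m at *
  obtain ⟨l, rfl⟩ := Quot.exists_rep m
  change (l : Multiset ℂ).card = d at hc
  rw [Multiset.coe_card] at hc
  subst hc
  refine ⟨fun i => l.get i, fun i => hr _ (by exact List.get_mem l i), ?_, ?_⟩
  · rw [ht]; change (l : Multiset ℂ).sum = _
    rw [Multiset.sum_coe, ← List.sum_ofFn, List.ofFn_get]
  · rw [hp]; change (Multiset.map _ (l : Multiset ℂ)).prod = _
    rw [Multiset.map_coe, Multiset.prod_coe, ← List.prod_ofFn]
    congr 1
    apply List.ext_getElem <;> simp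

lemma isIntegral_trace {d n : ℕ} (hn : 0 < n) (M : Matrix (Fin d) (Fin d) ℂ) (hM : M ^ n = 1) :
    IsIntegral ℤ M.trace := by
  obtain ⟨f, hf, ht, -⟩ := trace_as_sum M hM
  rw [ht]
  refine IsIntegral.sum _ fun i _ => ?_
  have : IsIntegral ℤ (f i ^ n) := by rw [hf]; exact isIntegral_one
  exact this.of_pow hn

lemma scalar_of_isIntegral {d n : ℕ} (hd : 0 < d) (hn : 0 < n) (M : Matrix (Fin d) (Fin d) ℂ)
    (hM : M ^ n = 1) (hint : IsIntegral ℤ (M.trace / (d : ℂ))) (h0 : M.trace ≠ 0) :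
    ∃ s : ℂ, M = algebraMap ℂ _ s := by
  obtain ⟨f, hf, ht, hp⟩ := trace_as_sum M hM
  rw [ht] at hint h0
  obtain ⟨s, hs⟩ := exists_eq_of_isIntegral hd hn f hf hint h0
  refine ⟨s, ?_⟩
  have h1 : minpoly ℂ M ∣ X ^ n - C 1 := minpoly.dvd _ _ (by simp [hM])
  have h2 : minpoly ℂ M ∣ (X - C s) ^ d := by
    have := Matrix.minpoly_dvd_charpoly M
    rw [hp] at this
    simpa [hs] using this
  have hsq : Squarefree (minpoly ℂ M) :=
    (separable_X_pow_sub_C (1 : ℂ) (by exact_mod_cast hn.ne') one_ne_zero).squarefree.squarefree_of_dvd h1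
  have h3 := (hsq.dvd_pow_iff_dvd hd.ne').1 h2
  have h4 := (minpoly.dvd_iff).1 h3
  simpa [sub_eq_zero] using h4


lemma trace_pi_matrix {n : ℕ} (d : Fin n → ℕ) (x : ∀ i, Matrix (Fin (d i)) (Fin (d i)) ℂ) :
    LinearMap.trace ℂ _ (LinearMap.mulLeft ℂ x) = ∑ i, (d i : ℂ) * (x i).trace := by
  classical
  let b := Pi.basis (fun i : Fin n => Matrix.stdBasis ℂ (Fin (d i)) (Fin (d i)))
  rw [LinearMap.trace_eq_matrix_trace ℂ b, Matrix.trace, Fintype.sum_sigma]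
  refine Finset.sum_congr rfl fun i _ => ?_
  rw [Fintype.sum_prod_type]
  have : ∀ a c : Fin (d i), (LinearMap.toMatrix b b (LinearMap.mulLeft ℂ x)).diag ⟨i, (a, c)⟩
      = x i a a := by
    intro a c
    simp only [Matrix.diag, LinearMap.toMatrix_apply, b, Pi.basis_repr, Pi.basis_apply,
      LinearMap.mulLeft_apply, Pi.mul_apply, Pi.single_eq_same]
    rw [Matrix.stdBasis_eq_single]
    rw [Matrix.stdBasis, Module.Basis.map_repr]
    simp [Matrix.mul_apply, Matrix.single, Matrix.of_apply]
  simp only [this]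
  simp [Matrix.trace, Finset.mul_sum]

lemma trace_regular {G : Type} [Group G] [Finite G] (g : G) (hg : g ≠ 1) :
    LinearMap.trace ℂ _ (LinearMap.mulLeft ℂ (MonoidAlgebra.of ℂ G g)) = 0 := by
  classical
  have := Fintype.ofFinite G
  rw [LinearMap.trace_eq_matrix_trace ℂ (MonoidAlgebra.basis G ℂ), Matrix.trace]
  refine Finset.sum_eq_zero fun x _ => ?_
  simp [Matrix.diag, LinearMap.toMatrix_apply, MonoidAlgebra.basis, MonoidAlgebra.single_mul_single, hg]

/-- A finite nonabelian simple group has no conjugacy class of prime power size (other than 1). -/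
theorem no_prime_power_class {G : Type} [Group G] [Finite G] [IsSimpleGroup G]
    (hnonab : ∃ a b : G, a * b ≠ b * a) (g : G) (hg : g ≠ 1) (p k : ℕ) (hp : p.Prime)
    (hcard : Nat.card {x : G // IsConj g x} = p ^ k) : False := by
  classical
  have := Fintype.ofFinite G
  have hcen : ∀ x : G, (∀ y, x * y = y * x) → x = 1 := by
    intro x hx
    rcases (inferInstance : (Subgroup.center G).Normal).eq_bot_or_eq_top with h | h
    · have : x ∈ Subgroup.center G := Subgroup.mem_center_iff.2 fun y => (hx y).symm
      rw [h] at this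
      exact this
    · obtain ⟨a, b, hab⟩ := hnonab
      exfalso
      have : b ∈ Subgroup.center G := by rw [h]; trivial
      exact hab (Subgroup.mem_center_iff.1 this a)
  obtain ⟨n, d, hd, ⟨e⟩⟩ :=
    IsSemisimpleRing.exists_algEquiv_pi_matrix_of_isAlgClosed ℂ (MonoidAlgebra ℂ G)
  let π : ∀ i, MonoidAlgebra ℂ G →ₐ[ℂ] Matrix (Fin (d i)) (Fin (d i)) ℂ := fun i =>
    (Pi.evalAlgHom ℂ _ i).comp e.toAlgHom
  have hπ : ∀ i x, π i x = e x i := fun _ _ => rfl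
  have hsurj : ∀ i, Function.Surjective (π i) := by
    intro i M
    refine ⟨e.symm (Pi.single i M), ?_⟩
    simp [hπ]
  let of := MonoidAlgebra.of ℂ G
  have hcentral : ∀ i z, (∀ h : G, of h * z = z * of h) → ∃ s : ℂ, π i z = algebraMap ℂ _ s := by
    intro i z hz
    have hz' : ∀ a, a * z = z * a := by
      intro a
      induction a using MonoidAlgebra.induction_on with
      | of h => exact hz h
      | add a b ha hb => rw [add_mul, mul_add, ha, hb]
      | smul r a ha => rw [smul_mul_assoc, mul_smul_comm, ha]
    have : π i z ∈ Set.range (Matrix.scalar (Fin (d i))) := by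
      rw [Matrix.mem_range_scalar_iff_commute_single']
      intro a b
      obtain ⟨y, hy⟩ := hsurj i (Matrix.single a b 1)
      rw [← hy]
      change _ * _ = _ * _
      rw [← map_mul, ← map_mul, hz']
    obtain ⟨s, hs⟩ := this
    exact ⟨s, by rw [← hs]; rfl⟩
  have hN : 0 < Nat.card G := Nat.card_pos
  have hpow : ∀ i h, π i (of h) ^ Nat.card G = 1 := by
    intro i h
    rw [← map_pow, ← map_pow, pow_card_eq_one', map_one, map_one]
  -- nontrivial components are faithful
  have hfaith : ∀ i, (∃ h, π i (of h) ≠ 1) → ∀ h, π i (of h) = 1 → h = 1 := by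
    intro i ⟨h, hh⟩ x hx
    let φ : G →* Matrix (Fin (d i)) (Fin (d i)) ℂ := (π i : MonoidAlgebra ℂ G →* _).comp of
    rcases (inferInstance : φ.ker.Normal).eq_bot_or_eq_top with h1 | h1
    · have : x ∈ φ.ker := hx
      rw [h1] at this
      exact this
    · exact absurd (show h ∈ φ.ker by rw [h1]; trivial) hh
  -- class sum
  let Cl : Finset G := Finset.univ.filter (IsConj g)
  have hCl : Cl.card = p ^ k := by
    rw [← hcard, Nat.card_eq_fintype_card, Fintype.card_subtype]
  let c : MonoidAlgebra ℂ G := ∑ x ∈ Cl, of x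
  have hcint : IsIntegral ℤ c := by
    let c' : MonoidAlgebra ℤ G := ∑ x ∈ Cl, MonoidAlgebra.of ℤ G x
    have h1 : IsIntegral ℤ c' := IsIntegral.of_finite ℤ c'
    have h2 : MonoidAlgebra.mapRingHom G (Int.castRingHom ℂ) c' = c := by
      simp [c', c, of]
    rw [← h2]
    exact h1.map (MonoidAlgebra.mapRingHom G (Int.castRingHom ℂ)).toIntAlgHom
  have hccen : ∀ h : G, of h * c = c * of h := by
    intro h
    simp only [c, Finset.mul_sum, Finset.sum_mul, ← map_mul]
    refine Finset.sum_bij (fun x _ => h * x * h⁻¹) ?_ ?_ ?_ ?_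
    · intro x hx
      simp only [Cl, Finset.mem_filter, Finset.mem_univ, true_and] at hx ⊢
      exact hx.trans (isConj_iff.2 ⟨h, rfl⟩)
    · intro x _ y _ hxy
      simpa using hxy
    · intro y hy
      simp only [Cl, Finset.mem_filter, Finset.mem_univ, true_and] at hy
      refine ⟨h⁻¹ * y * h, ?_, by group⟩
      simp only [Cl, Finset.mem_filter, Finset.mem_univ, true_and]
      exact hy.trans (isConj_iff.2 ⟨h⁻¹, by group⟩)
    · intro x _
      congr 1
      group
  have htrc : ∀ i, (π i c).trace = (p : ℂ) ^ k * (π i (of g)).trace := by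
    intro i
    simp only [c, map_sum, Matrix.trace_sum]
    rw [Finset.sum_congr rfl (g := fun _ => (π i (of g)).trace), Finset.sum_const, hCl]
    · simp
    · intro x hx
      simp only [Cl, Finset.mem_filter, Finset.mem_univ, true_and] at hx
      obtain ⟨y, rfl⟩ := isConj_iff.1 hx
      rw [map_mul of, map_mul (π i), Matrix.trace_mul_comm, ← map_mul (π i), ← map_mul of]
      congr 3
      group
  -- key dichotomy
  have key : ∀ i, (∃ h, π i (of h) ≠ 1) → ∃ z : ℂ, IsIntegral ℤ z ∧
      (d i : ℂ) * (π i (of g)).trace = p * z := by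
    intro i hi
    have hdi : 0 < d i := Nat.pos_of_ne_zero (hd i).out
    have hdC : (d i : ℂ) ≠ 0 := by exact_mod_cast hdi.ne'
    have htr := isIntegral_trace hN _ (hpow i g)
    by_cases hpd : p ∣ d i
    · obtain ⟨m, hm⟩ := hpd
      refine ⟨m * (π i (of g)).trace, ?_, by
        have hmC : (d i : ℂ) = p * m := by exact_mod_cast hm
        rw [hmC]; ring⟩
      have : IsIntegral ℤ (m : ℂ) := by
        simpa using (isIntegral_algebraMap (R := ℤ) (A := ℂ) (x := (m : ℤ)))
      exact this.mul htr
    · refine ⟨0, isIntegral_zero, ?_⟩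
      suffices (π i (of g)).trace = 0 by simp [this]
      by_contra h0
      obtain ⟨w, hw⟩ := hcentral i c hccen
      have hwint : IsIntegral ℤ w := by
        have h1 : IsIntegral ℤ (π i c) := hcint.map ((π i).restrictScalars ℤ)
        rw [hw] at h1
        have : Nonempty (Fin (d i)) := ⟨⟨0, hdi⟩⟩
        exact (isIntegral_algebraMap_iff (algebraMap ℂ (Matrix (Fin (d i)) (Fin (d i)) ℂ)).injective).1 h1
      have hwd : (d i : ℂ) * w = (p : ℂ) ^ k * (π i (of g)).trace := by
        rw [← htrc, hw]
        simp [Matrix.trace, Matrix.algebraMap_matrix_apply]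
      have hcop : IsCoprime ((p : ℤ) ^ k) (d i : ℤ) := by
        have : Nat.Coprime (p ^ k) (d i) := Nat.Coprime.pow_left _ ((hp.coprime_iff_not_dvd).2 hpd)
        exact_mod_cast this.isCoprime
      obtain ⟨a, b, hab⟩ := hcop
      have habC : (a : ℂ) * (p : ℂ) ^ k + b * (d i : ℂ) = 1 := by exact_mod_cast hab
      have hq : (π i (of g)).trace / (d i : ℂ) = a * w + b * (π i (of g)).trace := by
        rw [div_eq_iff hdC]
        linear_combination (-(π i (of g)).trace) * habC - a * hwd
      have hint : IsIntegral ℤ ((π i (of g)).trace / (d i : ℂ)) := by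
        rw [hq]
        have hI : ∀ t : ℤ, IsIntegral ℤ (t : ℂ) := fun t => by
          simpa using (isIntegral_algebraMap (R := ℤ) (A := ℂ) (x := t))
        exact ((hI a).mul hwint).add ((hI b).mul htr)
      obtain ⟨s, hs⟩ := scalar_of_isIntegral hdi hN _ (hpow i g) hint h0
      apply hg
      apply hcen
      intro y
      have h1 : π i (of (g * y * g⁻¹ * y⁻¹)) = 1 := by
        have h2 : π i (of g) * π i (of y) = π i (of y) * π i (of g) := by
          rw [hs]; exact Algebra.commutes s _
        rw [map_mul, map_mul, map_mul, map_mul, map_mul, map_mul, h2, mul_assoc (π i (of y)),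
          ← map_mul, ← map_mul of, mul_inv_cancel, map_one, map_one, mul_one,
          ← map_mul, ← map_mul of, mul_inv_cancel, map_one, map_one]
      have h3 := hfaith i hi _ h1
      calc g * y = (g * y * g⁻¹ * y⁻¹) * (y * g) := by group
        _ = y * g := by rw [h3, one_mul]
  -- the trivial component
  let ε : MonoidAlgebra ℂ G →ₐ[ℂ] ℂ := MonoidAlgebra.lift ℂ ℂ G 1
  have haug : ∀ i, (∀ h, π i (of h) = 1) → ∀ a, π i a = algebraMap ℂ _ (ε a) := by
    intro i hi a
    induction a using MonoidAlgebra.induction_on with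
    | of h =>
      have h1 : ε (MonoidAlgebra.of ℂ G h) = 1 := by simp [ε]
      rw [h1, map_one]
      exact hi h
    | add a b ha hb => rw [map_add, map_add, map_add, ha, hb]
    | smul r a ha => rw [map_smul, map_smul, ha, smul_eq_mul, map_mul, Algebra.smul_def]
  have hex : ∃ i, ∀ h, π i (of h) = 1 := by
    let s : MonoidAlgebra ℂ G := ∑ x, of x
    have hs0 : s ≠ 0 := by
      intro h
      have := congrArg (fun a : MonoidAlgebra ℂ G => a.coeff 1) h
      simp [s, of, Finsupp.single_apply] at this
    have hls : ∀ h, of h * s = s := by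
      intro h
      simp only [s, Finset.mul_sum, ← map_mul]
      exact Fintype.sum_equiv (Equiv.mulLeft h) _ _ (fun _ => rfl)
    have hrs : ∀ h, s * of h = s := by
      intro h
      simp only [s, Finset.sum_mul, ← map_mul]
      exact Fintype.sum_equiv (Equiv.mulRight h) _ _ (fun _ => rfl)
    have hes : e s ≠ 0 := by simpa using hs0
    obtain ⟨i, hi⟩ := Function.ne_iff.1 hes
    refine ⟨i, fun h => ?_⟩
    obtain ⟨w, hw⟩ := hcentral i s (fun h => by rw [hls, hrs])
    have hw0 : w ≠ 0 := by
      rintro rfl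
      apply hi
      rw [← hπ, hw]; simp
    have h1 : π i (of h) * π i s = π i s := by rw [← map_mul, hls]
    rw [hw, ← Algebra.commutes, ← Algebra.smul_def, Algebra.algebraMap_eq_smul_one] at h1
    exact smul_right_injective _ hw0 h1
  obtain ⟨i₀, hi₀⟩ := hex
  have huniq : ∀ j, j ≠ i₀ → ∃ h, π j (of h) ≠ 1 := by
    intro j hj
    by_contra! hj1
    have hdi : 0 < d j := Nat.pos_of_ne_zero (hd j).out
    have hdi' : 0 < d i₀ := Nat.pos_of_ne_zero (hd i₀).out
    have : Nonempty (Fin (d j)) := ⟨⟨0, hdi⟩⟩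
    have : Nonempty (Fin (d i₀)) := ⟨⟨0, hdi'⟩⟩
    let a := e.symm (Pi.single j 1)
    have h1 : π j a = 1 := by simp [hπ, a]
    have h2 : π i₀ a = 0 := by simp [hπ, a, hj.symm]
    rw [haug _ hj1] at h1
    rw [haug _ hi₀] at h2
    rw [(map_eq_zero_iff _ (algebraMap ℂ _).injective).1 h2] at h1
    simp at h1
  have hd0 : d i₀ = 1 := by
    by_contra hne
    have hdi' : 0 < d i₀ := Nat.pos_of_ne_zero (hd i₀).out
    let a : Fin (d i₀) := ⟨0, by omega⟩
    let b : Fin (d i₀) := ⟨1, by omega⟩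
    have hab : a ≠ b := by simp [a, b]
    obtain ⟨y, hy⟩ := hsurj i₀ (Matrix.single a b 1)
    rw [haug _ hi₀] at hy
    have := congrFun (congrFun hy a) b
    simp [Matrix.algebraMap_matrix_apply, hab] at this
  -- conclude
  have htot : ∑ i, (d i : ℂ) * (π i (of g)).trace = 0 := by
    have h1 := trace_regular g hg
    have h2 := trace_pi_matrix d (e (of g))
    have h3 : LinearMap.mulLeft ℂ (e (of g)) =
        e.toLinearEquiv.conj (LinearMap.mulLeft ℂ (of g)) := by
      refine LinearMap.ext fun x => ?_
      simp [LinearEquiv.conj_apply]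
    rw [h3, LinearMap.trace_conj'] at h2
    rw [← h1]
    exact h2.symm
  have hz : ∀ i, ∃ z : ℂ, i ≠ i₀ → IsIntegral ℤ z ∧ (d i : ℂ) * (π i (of g)).trace = p * z := by
    intro i
    by_cases hi : i = i₀
    · exact ⟨0, fun h => absurd hi h⟩
    · obtain ⟨z, hz⟩ := key i (huniq i hi)
      exact ⟨z, fun _ => hz⟩
  choose z hz using hz
  rw [← Finset.add_sum_erase _ _ (Finset.mem_univ i₀)] at htot
  rw [Finset.sum_congr rfl (g := fun i => (p : ℂ) * z i)
    (fun i hi => (hz i (Finset.ne_of_mem_erase hi)).2), ← Finset.mul_sum, hi₀] at htot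
  have hZ : IsIntegral ℤ (∑ i ∈ Finset.univ.erase i₀, z i) :=
    IsIntegral.sum _ fun i hi => (hz i (Finset.ne_of_mem_erase hi)).1
  generalize (∑ i ∈ Finset.univ.erase i₀, z i) = Z at htot hZ
  have h1 : (1 : ℂ) + p * Z = 0 := by
    simpa [hd0] using htot
  have hpC : (p : ℂ) ≠ 0 := by exact_mod_cast hp.ne_zero
  have h2 : Z = algebraMap ℚ ℂ (-1 / p) := by
    simp; field_simp; linear_combination h1
  rw [h2, isIntegral_algebraMap_iff (algebraMap ℚ ℂ).injective] at hZ
  obtain ⟨m, hm⟩ := IsIntegrallyClosed.isIntegral_iff.1 hZ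
  have hpQ : (p : ℚ) ≠ 0 := by exact_mod_cast hp.ne_zero
  have h3 : (m : ℚ) * p = -1 := by
    simp at hm; rw [hm]; field_simp
  have h4 : m * (p : ℤ) = -1 := by exact_mod_cast h3
  have h5 : (p : ℤ) ∣ 1 := ⟨-m, by linarith⟩
  have h6 : p ∣ 1 := by exact_mod_cast h5
  exact hp.one_lt.ne' (Nat.dvd_one.1 h6)

end

/-- A finite nonabelian simple group has order divisible by a prime at least 5. -/
theorem exists_prime_ge_five {G : Type} [Group G] [Finite G] [IsSimpleGroup G]
    (hnonab : ∃ a b : G, a * b ≠ b * a) : ∃ p : ℕ, p.Prime ∧ 5 ≤ p ∧ p ∣ Nat.card G := by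
  classical
  by_contra! hcon
  have h23 : ∀ p : ℕ, p.Prime → p ∣ Nat.card G → p = 2 ∨ p = 3 := by
    intro p hp hd
    have h5 : p < 5 := by
      by_contra h
      exact hcon p hp (by omega) hd
    have := hp.two_le
    interval_cases p
    · simp
    · simp
    · exact absurd hp (by norm_num)
  have hcent : ∀ x ∈ Subgroup.center G, x = 1 := by
    intro x hx
    rcases (inferInstance : (Subgroup.center G).Normal).eq_bot_or_eq_top with h | h
    · rw [h] at hx
      exact hx
    · obtain ⟨a, b, hab⟩ := hnonab
      exfalso
      have : b ∈ Subgroup.center G := by rw [h]; trivial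
      exact hab (Subgroup.mem_center_iff.1 this a)
  -- Sylow 2-subgroup
  have : Fact (Nat.Prime 2) := ⟨Nat.prime_two⟩
  have : Fact (Nat.Prime 3) := ⟨Nat.prime_three⟩
  obtain ⟨P⟩ : Nonempty (Sylow 2 G) := inferInstance
  have hidx : ∃ k, (P : Subgroup G).index = 3 ^ k := by
    refine ⟨_, Nat.eq_prime_pow_of_unique_prime_dvd P.1.index_ne_zero_of_finite fun {q} hq hqd => ?_⟩
    rcases h23 q hq (hqd.trans P.1.index_dvd_card) with rfl | rfl
    · exact absurd hqd P.not_dvd_index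
    · rfl
  obtain ⟨k, hk⟩ := hidx
  rcases subsingleton_or_nontrivial (P : Subgroup G) with hs | hnt
  · have hb : (P : Subgroup G) = ⊥ := (Subgroup.eq_bot_iff_forall _).2 fun x hx => by
      have := Subsingleton.elim (⟨x, hx⟩ : (P : Subgroup G)) 1
      exact congrArg Subtype.val this
    rw [hb, Subgroup.index_bot] at hk
    have := (IsPGroup.of_card hk).center_nontrivial
    obtain ⟨x, hx⟩ := exists_ne (1 : Subgroup.center G)
    exact hx (Subtype.ext (hcent x x.2))
  · have := P.isPGroup'.center_nontrivial
    obtain ⟨x, hx⟩ := exists_ne (1 : Subgroup.center (P : Subgroup G))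
    let g : G := ((x : (P : Subgroup G)) : G)
    have hg : g ≠ 1 := by
      intro h
      apply hx
      apply Subtype.ext
      apply Subtype.ext
      exact h
    have hle : (P : Subgroup G) ≤ Subgroup.centralizer {g} := by
      intro y hy
      rw [Subgroup.mem_centralizer_singleton_iff]
      have := Subgroup.mem_center_iff.1 x.2 ⟨y, hy⟩
      exact congrArg Subtype.val this
    have hcl : Nat.card {y : G // IsConj g y} = (Subgroup.centralizer {g}).index := by
      have hi : (Subgroup.centralizer {g}).index = (MulAction.stabilizer (ConjAct G) g).index := by
        have h1 := (Subgroup.centralizer {g}).card_mul_index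
        have h2 := (MulAction.stabilizer (ConjAct G) g).card_mul_index
        have h3 : Nat.card (ConjAct G) = Nat.card G :=
          Nat.card_congr (ConjAct.ofConjAct (G := G)).toEquiv
        rw [Subgroup.nat_card_centralizer_nat_card_stabilizer, ← h3, ← h2] at h1
        have : Finite (ConjAct G) := Finite.of_equiv G (ConjAct.toConjAct (G := G)).toEquiv
        exact Nat.eq_of_mul_eq_mul_left Nat.card_pos h1
      rw [hi, MulAction.index_stabilizer, ← Nat.card_coe_set_eq]
      refine Nat.card_congr (Equiv.subtypeEquivRight fun y => ?_)
      rw [ConjAct.mem_orbit_conjAct]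
      exact isConj_comm
    have hdvd : Nat.card {y : G // IsConj g y} ∣ 3 ^ k := by
      rw [hcl, ← hk]
      exact Subgroup.index_dvd_of_le hle
    obtain ⟨j, -, hj⟩ := (Nat.dvd_prime_pow Nat.prime_three).1 hdvd
    exact no_prime_power_class hnonab g hg 3 j Nat.prime_three hj


lemma eq_one_of_fix {V : Type} [Fintype V] (Γ : SimpleGraph V) (hconn : Γ.Connected)
    (hcubic : ∀ v : V, (Γ.neighborSet v).ncard = 3) (h : Equiv.Perm V)
    (hA : ∀ u v : V, Γ.Adj (h u) (h v) ↔ Γ.Adj u v) (m : ℕ) (hm : Nat.Coprime 6 m)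
    (hpow : h ^ m = 1) (v : V) (hv : h v = v) : h = 1 := by
  classical
  have step : ∀ u w, Γ.Adj u w → h u = u → h w = w := by
    intro u w huw hu
    have hinv : ∀ y, y ∈ Γ.neighborSet u ↔ h y ∈ Γ.neighborSet u := by
      intro y
      rw [SimpleGraph.mem_neighborSet, SimpleGraph.mem_neighborSet, ← hA u y, hu]
    let σ : Equiv.Perm (Γ.neighborSet u) := h.subtypePerm fun y => (hinv y).symm
    have h6 : σ ^ 6 = 1 := by
      have hc : Nat.card (Equiv.Perm (Γ.neighborSet u)) = 6 := by
        rw [Nat.card_perm, Nat.card_coe_set_eq, hcubic]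
        rfl
      rw [← hc]
      exact pow_card_eq_one'
    have hσm : σ ^ m = 1 := by
      have : σ ^ m = (h ^ m).subtypePerm (fun y => by rw [hpow]; rfl) := by
        rw [Equiv.Perm.subtypePerm_pow]
      rw [this]
      ext y
      simp [hpow]
    have h1 : σ = 1 := by
      have h2 : orderOf σ ∣ Nat.gcd 6 m :=
        Nat.dvd_gcd (orderOf_dvd_of_pow_eq_one h6) (orderOf_dvd_of_pow_eq_one hσm)
      rw [hm] at h2
      exact orderOf_eq_one_iff.1 (Nat.dvd_one.1 h2)
    have := congrArg (fun τ : Equiv.Perm (Γ.neighborSet u) => ((τ ⟨w, huw⟩ : Γ.neighborSet u) : V)) h1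
    simpa [σ] using this
  have hwalk : ∀ u w, Γ.Walk u w → h u = u → h w = w := by
    intro u w W
    induction W with
    | nil => exact id
    | cons hadj _ ih => exact fun hu => ih (step _ _ hadj hu)
  ext w
  obtain ⟨W⟩ := hconn.preconnected v w
  simpa using hwalk v w W hv

theorem stmt16 {V : Type} [Fintype V] (Γ : SimpleGraph V)
    (hconn : Γ.Connected)
    (hcubic : ∀ v : V, (Γ.neighborSet v).ncard = 3)
    (G : Subgroup (Equiv.Perm V))
    (hAut : ∀ g ∈ G, ∀ u v : V, Γ.Adj (g u) (g v) ↔ Γ.Adj u v)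
    (hTrans : ∀ u v : V, ∃ g ∈ G, g u = v)
    (t : ℕ) (S : Fin t → Type) [∀ i, Group (S i)]
    (hsimple : ∀ i, IsSimpleGroup (S i))
    (hnonab : ∀ i, ∃ a b : S i, a * b ≠ b * a)
    (hsoc : Nonempty (↥(socle ↥G) ≃* ((i : Fin t) → S i))) :
    ∃ H : Subgroup (Equiv.Perm V), H ≤ G ∧ Semiregular H ∧ 5 ^ t ≤ Nat.card ↥H := by
  classical
  obtain ⟨e⟩ := hsoc
  have hfin : Finite ((i : Fin t) → S i) := Finite.of_equiv _ e.toEquiv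
  have hfinS : ∀ i, Finite (S i) := fun i =>
    Finite.of_surjective (fun f : (i : Fin t) → S i => f i) fun y =>
      ⟨Pi.mulSingle i y, by simp⟩
  have hx : ∀ i, ∃ p : ℕ, p.Prime ∧ 5 ≤ p ∧ ∃ x : S i, orderOf x = p := by
    intro i
    have := hsimple i
    have := hfinS i
    obtain ⟨p, hp, h5, hd⟩ := exists_prime_ge_five (hnonab i)
    have : Fact p.Prime := ⟨hp⟩
    exact ⟨p, hp, h5, exists_prime_orderOf_dvd_card' p hd⟩
  choose p hp h5 x hxo using hx
  let Q : Subgroup ((i : Fin t) → S i) := Subgroup.pi Set.univ fun i => Subgroup.zpowers (x i)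
  have hcardQ : Nat.card Q = ∏ i, p i := by
    have : Nat.card Q = Nat.card ((i : Fin t) → Subgroup.zpowers (x i)) :=
      Nat.card_congr
        { toFun := fun f i => ⟨f.1 i, f.2 i trivial⟩
          invFun := fun f => ⟨fun i => f i, fun i _ => (f i).2⟩
          left_inv := fun _ => rfl
          right_inv := fun _ => rfl }
    rw [this, Nat.card_pi]
    simp [Nat.card_zpowers, hxo]
  let ι : ((i : Fin t) → S i) →* Equiv.Perm V :=
    G.subtype.comp ((socle ↥G).subtype.comp e.symm.toMonoidHom)
  have hι : Function.Injective ι := by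
    intro a b hab
    exact e.symm.injective (Subtype.ext (Subtype.ext hab))
  have hcardH : Nat.card (Q.map ι) = ∏ i, p i := by
    rw [← hcardQ]
    exact (Nat.card_congr (Q.equivMapOfInjective ι hι).toEquiv).symm
  have hle : Q.map ι ≤ G := by
    rintro _ ⟨q, -, rfl⟩
    exact SetLike.coe_mem _
  refine ⟨Q.map ι, hle, ?_, ?_⟩
  · intro h hh v hv
    have hcop : Nat.Coprime 6 (∏ i, p i) := by
      refine Nat.Coprime.prod_right fun i _ => ?_
      refine Nat.Coprime.symm (((hp i).coprime_iff_not_dvd).2 fun hd => ?_)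
      have := Nat.le_of_dvd (by norm_num) hd
      have h5i := h5 i
      have hpi := hp i
      generalize p i = r at *
      interval_cases r
      · omega
      · exact absurd hpi (by norm_num)
    have hord : h ^ (∏ i, p i) = 1 := by
      have := pow_card_eq_one' (x := (⟨h, hh⟩ : Q.map ι))
      rw [hcardH] at this
      exact congrArg Subtype.val this
    exact eq_one_of_fix Γ hconn hcubic h (hAut h (hle hh)) _ hcop hord v hv
  · rw [hcardH]
    calc 5 ^ t = ∏ _i : Fin t, 5 := by simp
      _ ≤ ∏ i, p i := Finset.prod_le_prod' fun i _ => h5 i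

end Stmt16
end
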